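/- arXiv:2007.11482 — 2 statements merged into one kernel-verified Lean document; each statement's English description precedes it below -/
import Mathlib

section
/- Mutual information at high SNR: if σ² = L/(α log L) with α > 2 fixed, then the single-sample mutual information in the MRA model satisfies I(X; Y) = (L/2)·log(1 + σ^{−2}) − (1 + o(1))·log L as L → ∞; equivalently, lim_{L→∞} I(X; Y)/log L = α/2 − 1. -/
open MeasureTheory ProbabilityTheory Filter
open scoped ENNReal

namespace MRAformal

/-- Standard Gaussian measure `N(0, I_L)` on `ℝ^L`. -/
noncomputable def stdGaussian (L : ℕ) : Measure (Fin L → ℝ) :=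
  Measure.pi fun _ => gaussianReal 0 1

/-- Uniform distribution on `{0, …, L-1}`. -/
noncomputable def unifFin (L : ℕ) : Measure (Fin L) :=
  ((L : ℝ≥0∞))⁻¹ • Measure.count

/-- Alignment distortion `ρ(x, x̂) = L⁻¹ min_ℓ ‖x - R_ℓ x̂‖²`,
where `(R_ℓ x̂)_j = x̂_{j+ℓ mod L}`. -/
noncomputable def rho (L : ℕ) (x xh : Fin L → ℝ) : ℝ :=
  (L : ℝ)⁻¹ * ⨅ ℓ : Fin L, ∑ j, (x j - xh (j + ℓ)) ^ 2

/-- Base probability space for the MRA model with `n` samples: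
the signal `X`, the i.i.d. uniform shifts `ℓ_i`, and the i.i.d. Gaussian noises `Z_i`. -/
noncomputable def mraBase (L n : ℕ) :
    Measure ((Fin L → ℝ) × (Fin n → Fin L) × (Fin n → Fin L → ℝ)) :=
  (stdGaussian L).prod ((Measure.pi fun _ => unifFin L).prod (Measure.pi fun _ => stdGaussian L))

/-- The measurements `Y_i = R_{ℓ_i} X + σ Z_i`. -/
def mraY (L n : ℕ) (σ : ℝ) (ω : (Fin L → ℝ) × (Fin n → Fin L) × (Fin n → Fin L → ℝ)) :
    Fin n → Fin L → ℝ :=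
  fun i j => ω.1 (j + ω.2.1 i) + σ * ω.2.2 i j

/-- `MSE*_MRA(L, σ², n)`: the infimum over measurable estimators `X̂(Y_1,…,Y_n)` of `E ρ(X, X̂)`.
Here `σ` is the noise standard deviation. -/
noncomputable def MSEstarMRA (L n : ℕ) (σ : ℝ) : ℝ :=
  sInf { e : ℝ | ∃ f : (Fin n → Fin L → ℝ) → (Fin L → ℝ), Measurable f ∧
    e = ∫ ω, rho L ω.1 (f (mraY L n σ ω)) ∂(mraBase L n) }

/-- `n*_MRA(L, σ², ε) = min {n : MSE*_MRA(L, σ², n) ≤ ε}`. -/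
noncomputable def nstarMRA (L : ℕ) (σ ε : ℝ) : ℕ :=
  sInf { n : ℕ | MSEstarMRA L n σ ≤ ε }

/-- Noise level such that `σ²(α) = L / (α log L)`. -/
noncomputable def sigmaAlpha (L : ℕ) (α : ℝ) : ℝ :=
  Real.sqrt ((L : ℝ) / (α * Real.log L))

/-- `n*_MRA(L, α, ε) := n*_MRA(L, σ²(α), ε)`. -/
noncomputable def nstarMRAa (L : ℕ) (α ε : ℝ) : ℕ :=
  nstarMRA L (sigmaAlpha L α) ε

/-- Mutual information `I(U; V)`: the Kullback–Leibler divergence of the joint law with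
respect to the product of its marginals (natural logarithm), expressed as the integral of
the log of the Radon–Nikodym derivative. -/
noncomputable def mutualInfo {α β : Type*} [MeasurableSpace α] [MeasurableSpace β]
    (μ : Measure (α × β)) : ℝ :=
  ∫ p, Real.log ((μ.rnDeriv ((μ.map Prod.fst).prod (μ.map Prod.snd))) p).toReal ∂μ

/-- Joint law of `(X, (Y_1,…,Y_n))` in the MRA model. -/
noncomputable def mraJoint (L n : ℕ) (σ : ℝ) :
    Measure ((Fin L → ℝ) × (Fin n → Fin L → ℝ)) :=
  (mraBase L n).map fun ω => (ω.1, mraY L n σ ω)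

/-- Joint law of `(X, Y)` for a single MRA measurement `Y = R_ℓ X + σ Z`. -/
noncomputable def mraJoint1 (L : ℕ) (σ : ℝ) : Measure ((Fin L → ℝ) × (Fin L → ℝ)) :=
  ((stdGaussian L).prod ((unifFin L).prod (stdGaussian L))).map
    fun ω => (ω.1, fun j => ω.1 (j + ω.2.1) + σ * ω.2.2 j)

/-!
Given the shift `ℓ`, the pair `(X, Y)` is a Gaussian channel whose mutual information is the
capacity `C = (L/2) log (1 + σ⁻²)`, and so `I(X; Y) = C - log L + H(ℓ | X, Y)`. The
conditional entropy is the mean of `log (1 + ∑ₖ exp rₖ)`, where `rₖ` is the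
log-likelihood ratio of the competing shift `k` to the true shift. Distinct shifts of `X` have
correlation at most `ε L` outside an event of probability `O(1 / (ε² L))`, by the second
moment. On that exceptional event the conditional mean of `exp rₖ` given `X` is `1`, because a
likelihood ratio integrates to `1`. Off it, discounting by the component of the noise along the
true signal makes the mean of `exp rₖ` at most `exp (σ⁻² ε L - C)`, and the discount
itself costs only `O(σ⁻¹ √L) = O(√log L)`. Since `C ~ (α/2) log L`, the union bound over
the `L` shifts gives `H(ℓ | X, Y) ≤ max 0 (1 - α/2) log L + o(log L)`, which is `o(log L)`
for `α > 2`.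
-/

section

open scoped NNReal Topology

section General

variable {ι : Type*} [Fintype ι] {X : ι → Type*} [∀ i, MeasurableSpace (X i)]
  (μ : ∀ i, Measure (X i)) [∀ i, IsProbabilityMeasure (μ i)]

lemma lintegral_prod_eval_pi {f : ∀ i, X i → ℝ≥0∞} (hf : ∀ i, Measurable (f i)) :
    ∫⁻ x, ∏ i, f i (x i) ∂Measure.pi μ = ∏ i, ∫⁻ t, f i t ∂μ i := by
  rw [lintegral_prod_eq_prod_lintegral_of_indepFun Finset.univ (fun i (x : ∀ i, X i) => f i (x i))
    (iIndepFun_pi fun i => (hf i).aemeasurable) fun i => (hf i).comp (measurable_pi_apply i)]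
  exact Finset.prod_congr rfl fun i _ => (measurePreserving_eval μ i).lintegral_comp (hf i)

lemma pi_withDensity {f : ∀ i, X i → ℝ≥0∞} (hf : ∀ i, Measurable (f i))
    [∀ i, SigmaFinite ((μ i).withDensity (f i))] :
    Measure.pi (fun i => (μ i).withDensity (f i)) =
      (Measure.pi μ).withDensity fun x => ∏ i, f i (x i) := by
  refine Measure.pi_eq fun s hs => ?_
  have indicator_prod : (Set.univ.pi s).indicator (fun x : ∀ i, X i => ∏ i, f i (x i)) =
      fun x => ∏ i, (s i).indicator (f i) (x i) := by
    funext x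
    by_cases hx : ∀ i, x i ∈ s i
    · simp only [Set.indicator_of_mem (hx _), Set.indicator_of_mem (Set.mem_univ_pi.2 hx)]
    · obtain ⟨i, hi⟩ := not_forall.1 hx
      rw [Set.indicator_of_notMem (mt Set.mem_univ_pi.1 hx),
        Finset.prod_eq_zero (Finset.mem_univ i) (Set.indicator_of_notMem hi _)]
  rw [withDensity_apply _ (MeasurableSet.univ_pi hs),
    ← lintegral_indicator (MeasurableSet.univ_pi hs), indicator_prod,
    lintegral_prod_eval_pi μ fun i => (hf i).indicator (hs i)]
  simp only [withDensity_apply _ (hs _), lintegral_indicator (hs _)]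

lemma sum_withDensity {Ω κ : Type*} [Fintype κ] {mΩ : MeasurableSpace Ω} (m : Measure Ω)
    {f : κ → Ω → ℝ≥0∞} (hf : ∀ k, Measurable (f k)) :
    ∑ k, m.withDensity (f k) = m.withDensity fun ω => ∑ k, f k ω := by
  ext s hs
  simp only [Measure.finsetSum_apply, withDensity_apply _ hs,
    lintegral_finsetSum _ fun k _ => hf k]

end General

section Channels

variable {Ω A B : Type*} {mΩ : MeasurableSpace Ω} {mA : MeasurableSpace A}
  {mB : MeasurableSpace B}

lemma map_prodMk_eq_withDensity {μ : Measure A} {ν : Measure Ω} {ρ : Measure B} [SFinite ν]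
    [SFinite ρ] {f : A × Ω → B} {h : A × B → ℝ≥0∞} (hf : Measurable f) (hh : Measurable h)
    (hmap : ∀ a, ν.map (fun ω => f (a, ω)) = ρ.withDensity fun b => h (a, b)) :
    (μ.prod ν).map (fun p => (p.1, f p)) = (μ.prod ρ).withDensity h := by
  refine Measure.ext_of_lintegral _ fun F hF => ?_
  rw [lintegral_map hF (by fun_prop), lintegral_prod _ (by fun_prop),
    lintegral_withDensity_eq_lintegral_mul _ hh hF, lintegral_prod _ (by fun_prop)]
  refine lintegral_congr fun a => ?_
  calc ∫⁻ ω, F (a, f (a, ω)) ∂ν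
      = ∫⁻ b, F (a, b) ∂ν.map (fun ω => f (a, ω)) := by
        rw [lintegral_map (by fun_prop) (by fun_prop)]
    _ = ∫⁻ b, (h * F) (a, b) ∂ρ := by
        rw [hmap, lintegral_withDensity_eq_lintegral_mul _ (by fun_prop) (by fun_prop)]
        rfl

lemma map_prod_smul_count_prod {κ : Type*} [Fintype κ] [MeasurableSpace κ]
    [MeasurableSingletonClass κ] (c : ℝ≥0∞) (μ : Measure A) (ν : Measure Ω) [SFinite ν]
    {f : κ → A × Ω → B} (hf : ∀ k, Measurable (f k)) :
    (μ.prod ((c • Measure.count).prod ν)).map (fun p => f p.2.1 (p.1, p.2.2)) =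
      c • ∑ k, (μ.prod ν).map (f k) := by
  have hf' : Measurable fun p : A × κ × Ω => f p.2.1 (p.1, p.2.2) := by
    have : Measurable fun q : κ × A × Ω => f q.1 q.2 := measurable_from_prod_countable_right hf
    exact this.comp (by fun_prop : Measurable fun p : A × κ × Ω => (p.2.1, p.1, p.2.2))
  refine Measure.ext_of_lintegral _ fun F hF => ?_
  have hF' : Measurable fun p : A × κ × Ω => F (f p.2.1 (p.1, p.2.2)) := hF.comp hf'
  have hFf (k : κ) : Measurable fun p => F (f k p) := hF.comp (hf k)
  calc ∫⁻ b, F b ∂(μ.prod ((c • Measure.count).prod ν)).map (fun p => f p.2.1 (p.1, p.2.2))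
      = ∫⁻ a, c * ∑ k, ∫⁻ ω, F (f k (a, ω)) ∂ν ∂μ := by
        rw [lintegral_map hF hf', lintegral_prod _ hF'.aemeasurable]
        refine lintegral_congr fun a => ?_
        rw [lintegral_prod (fun q : κ × Ω => F (f q.1 (a, q.2)))
          (hF'.comp measurable_prodMk_left).aemeasurable, lintegral_smul_measure, lintegral_count,
          tsum_fintype, smul_eq_mul]
    _ = c * ∑ k, ∫⁻ a, ∫⁻ ω, F (f k (a, ω)) ∂ν ∂μ := by
        rw [lintegral_const_mul _ (Finset.measurable_fun_sum _ fun k _ =>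
          (hFf k).lintegral_prod_right'), lintegral_finsetSum _ fun k _ =>
          (hFf k).lintegral_prod_right']
    _ = ∫⁻ b, F b ∂(c • ∑ k, (μ.prod ν).map (f k)) := by
        simp only [lintegral_smul_measure, lintegral_finsetSum_measure, lintegral_map hF (hf _),
          lintegral_prod _ (hFf _).aemeasurable, smul_eq_mul]

lemma integral_eq_zero_of_comp_eq_neg {μ : Measure Ω} {T : Ω → Ω} (hT : MeasurePreserving T μ μ)
    (hTe : MeasurableEmbedding T) {f : Ω → ℝ} (hf : ∀ ω, f (T ω) = -f ω) : ∫ ω, f ω ∂μ = 0 := by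
  have : ∫ ω, f ω ∂μ = -∫ ω, f ω ∂μ := by
    rw [← integral_neg, ← hT.integral_comp hTe]
    simp only [hf]
  linarith

lemma mutualInfo_nonneg {μ : Measure (A × B)} [IsProbabilityMeasure μ]
    (h : μ ≪ (μ.map Prod.fst).prod (μ.map Prod.snd)) : 0 ≤ mutualInfo μ := by
  have : IsProbabilityMeasure (μ.map Prod.fst) := Measure.isProbabilityMeasure_map (by fun_prop)
  have : IsProbabilityMeasure (μ.map Prod.snd) := Measure.isProbabilityMeasure_map (by fun_prop)
  by_cases hi : Integrable (llr μ ((μ.map Prod.fst).prod (μ.map Prod.snd))) μ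
  · simpa [mutualInfo, llr_def] using
      InformationTheory.integral_llr_add_sub_measure_univ_nonneg h hi
  · exact (integral_undef hi).ge

lemma mutualInfo_eq_integral_log {μ : Measure (A × B)} {μA : Measure A} {μB : Measure B}
    [SigmaFinite μA] [SigmaFinite μB] (hA : μ.map Prod.fst = μA) (hB : μ.map Prod.snd = μB)
    {f : A × B → ℝ} (hf : Measurable f) (hf0 : ∀ p, 0 ≤ f p)
    (h : μ = (μA.prod μB).withDensity fun p => .ofReal (f p)) :
    mutualInfo μ = ∫ p, Real.log (f p) ∂μ := by
  have hac : μ ≪ μA.prod μB := h.symm ▸ withDensity_absolutelyContinuous _ _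
  have hdens : μ.rnDeriv (μA.prod μB) =ᵐ[μ] fun p => .ofReal (f p) := by
    have := Measure.rnDeriv_withDensity (μA.prod μB) hf.ennreal_ofReal
    exact hac.ae_le (h ▸ this)
  rw [mutualInfo, hA, hB]
  refine integral_congr_ae ?_
  filter_upwards [hdens] with p hp
  rw [hp, ENNReal.toReal_ofReal (hf0 p)]

end Channels

section Gaussian

variable (ι : Type*) [Fintype ι]

/-- The centred Gaussian measure on `ℝ^ι` with covariance `v • I`. -/
noncomputable abbrev gaussianPi (v : ℝ≥0) : Measure (ι → ℝ) := Measure.pi fun _ => gaussianReal 0 v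

/-- The capacity, in nats, of `n` uses of the additive white Gaussian noise channel at
signal-to-noise ratio `s`. -/
noncomputable def awgnCapacity (n : ℕ) (s : ℝ) : ℝ := n / 2 * Real.log (1 + s)

variable {ι}

/-- The information density of the channel `x ↦ x + σ Z` with standard Gaussian input and noise:
the logarithm of the density of the output law given `x` relative to its marginal law
`N(0, (1 + σ²) I)`. -/
noncomputable def infoDensity (σ : ℝ≥0) (x y : ι → ℝ) : ℝ :=
  awgnCapacity (Fintype.card ι) ((σ : ℝ) ^ 2)⁻¹ + y ⬝ᵥ y / (2 * (1 + (σ : ℝ) ^ 2)) -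
    (y - x) ⬝ᵥ (y - x) / (2 * (σ : ℝ) ^ 2)

@[fun_prop]
lemma measurable_infoDensity (σ : ℝ≥0) :
    Measurable fun p : (ι → ℝ) × (ι → ℝ) => infoDensity σ p.1 p.2 := by
  unfold infoDensity
  fun_prop

lemma measurePreserving_comp_perm (v : ℝ≥0) (e : Equiv.Perm ι) :
    MeasurePreserving (fun x : ι → ℝ => x ∘ e) (gaussianPi ι v) (gaussianPi ι v) :=
  measurePreserving_arrowCongr' (fun _ => gaussianReal 0 v) (fun _ => gaussianReal 0 v)
    e.symm (.refl ℝ) fun _ => .id _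

lemma measurePreserving_permute (e : Equiv.Perm ι) :
    MeasurePreserving (fun p : (ι → ℝ) × (ι → ℝ) => (p.1 ∘ e, p.2))
      ((gaussianPi ι 1).prod (gaussianPi ι 1)) ((gaussianPi ι 1).prod (gaussianPi ι 1)) :=
  (measurePreserving_comp_perm 1 e).prod (.id _)

lemma measurePreserving_update_neg [DecidableEq ι] (v : ℝ≥0) (i : ι) :
    MeasurePreserving (fun x : ι → ℝ => Function.update x i (-x i))
      (gaussianPi ι v) (gaussianPi ι v) := by
  have h := measurePreserving_pi (fun _ : ι => gaussianReal 0 v) (fun _ => gaussianReal 0 v)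
    (f := fun j => if j = i then fun t => -t else fun t => t) fun j => ?_
  · convert h using 3 with x j
    by_cases hj : j = i
    · subst hj; simp
    · simp [hj]
  · split_ifs
    · exact ⟨measurable_neg, by rw [gaussianReal_map_neg, neg_zero]⟩
    · exact .id _

lemma integral_eq_zero_of_odd_coordinate [DecidableEq ι] (v : ℝ≥0) (i : ι) {f : (ι → ℝ) → ℝ}
    (hf : ∀ x, f (Function.update x i (-x i)) = -f x) : ∫ x, f x ∂gaussianPi ι v = 0 := by
  have hinv : Function.Involutive fun x : ι → ℝ => Function.update x i (-x i) := fun x => by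
    simp
  have hm := measurePreserving_update_neg v i
  exact integral_eq_zero_of_comp_eq_neg hm
    (MeasurableEquiv.ofInvolutive _ hinv hm.measurable).measurableEmbedding hf

lemma integral_sq_gaussianReal (v : ℝ≥0) : ∫ t, t ^ 2 ∂gaussianReal 0 v = v := by
  rw [← variance_of_integral_eq_zero aemeasurable_id' integral_id_gaussianReal]
  exact variance_fun_id_gaussianReal

lemma memLp_eval_gaussianPi (v : ℝ≥0) (i : ι) (p : ℝ≥0) :
    MemLp (fun x : ι → ℝ => x i) p (gaussianPi ι v) :=
  (memLp_id_gaussianReal p).comp_measurePreserving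
    (measurePreserving_eval (fun _ => gaussianReal 0 v) i)

lemma integral_eval_sq_gaussianPi (v : ℝ≥0) (i : ι) : ∫ x, x i ^ 2 ∂gaussianPi ι v = v := by
  rw [← integral_sq_gaussianReal v]
  exact integral_comp_eval (μ := fun _ : ι => gaussianReal 0 v) (f := fun t => t ^ 2)
    (by fun_prop)

lemma integral_dotProduct_self_gaussianPi (v : ℝ≥0) :
    ∫ x, x ⬝ᵥ x ∂gaussianPi ι v = Fintype.card ι * v := by
  simp only [dotProduct, ← sq]
  rw [integral_finsetSum _ fun i _ => (memLp_eval_gaussianPi v i 2).integrable_sq]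
  simp [integral_eval_sq_gaussianPi]

lemma integrable_dotProduct_self_gaussianPi (v : ℝ≥0) :
    Integrable (fun x => x ⬝ᵥ x) (gaussianPi ι v) := by
  simp only [dotProduct, ← sq]
  exact integrable_finsetSum _ fun i _ => (memLp_eval_gaussianPi v i 2).integrable_sq

lemma lintegral_exp_mul_gaussianReal (c : ℝ) :
    ∫⁻ t, .ofReal (Real.exp (c * t)) ∂gaussianReal 0 1 = .ofReal (Real.exp (c ^ 2 / 2)) := by
  rw [← ofReal_integral_eq_lintegral_ofReal (integrable_exp_mul_gaussianReal c)
    (ae_of_all _ fun _ => (Real.exp_pos _).le)]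
  simpa [mgf] using congrArg ENNReal.ofReal
    (congrFun (mgf_id_gaussianReal (μ := 0) (v := 1)) c)

lemma lintegral_exp_dotProduct_gaussianPi (c : ι → ℝ) :
    ∫⁻ z, .ofReal (Real.exp (c ⬝ᵥ z)) ∂gaussianPi ι 1 = .ofReal (Real.exp (c ⬝ᵥ c / 2)) := by
  simp only [dotProduct, Finset.sum_div, Real.exp_sum,
    ENNReal.ofReal_prod_of_nonneg fun _ _ => (Real.exp_pos _).le]
  rw [lintegral_prod_eval_pi (fun _ => gaussianReal 0 1)
    (f := fun i t => .ofReal (Real.exp (c i * t))) fun i => by fun_prop]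
  simp only [lintegral_exp_mul_gaussianReal, sq]

lemma lintegral_exp_neg_sq_gaussianReal {s : ℝ} (hs : 0 ≤ s) :
    ∫⁻ t, .ofReal (Real.exp (-s / 2 * t ^ 2)) ∂gaussianReal 0 1 =
      .ofReal (Real.exp (-Real.log (1 + s) / 2)) := by
  have hint : Integrable (fun t => Real.exp (-s / 2 * t ^ 2)) (gaussianReal 0 1) :=
    .of_bound (by fun_prop) 1 (ae_of_all _ fun t => by
      rw [Real.norm_eq_abs, Real.abs_exp]
      exact Real.exp_le_one_iff.2 (mul_nonpos_of_nonpos_of_nonneg (by linarith) (sq_nonneg t)))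
  rw [← ofReal_integral_eq_lintegral_ofReal hint (ae_of_all _ fun _ => (Real.exp_pos _).le),
    integral_gaussianReal_eq_integral_smul one_ne_zero]
  congr 1
  calc ∫ t, gaussianPDFReal 0 1 t • Real.exp (-s / 2 * t ^ 2)
      = ∫ t, (√(2 * Real.pi))⁻¹ * Real.exp (-((1 + s) / 2) * t ^ 2) := by
        refine integral_congr_ae (ae_of_all _ fun t => ?_)
        simp only [gaussianPDFReal, NNReal.coe_one, smul_eq_mul, mul_one, mul_assoc, ← Real.exp_add]
        ring_nf
    _ = (√(1 + s))⁻¹ := by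
        rw [integral_const_mul, integral_gaussian, ← Real.sqrt_inv, ← Real.sqrt_inv,
          ← Real.sqrt_mul (by positivity)]
        congr 1
        field_simp
    _ = Real.exp (-Real.log (1 + s) / 2) := by
        rw [neg_div, Real.exp_neg, ← Real.log_sqrt (by positivity), Real.exp_log (by positivity)]

lemma lintegral_exp_neg_dotProduct_self_gaussianPi {s : ℝ} (hs : 0 ≤ s) :
    ∫⁻ x, .ofReal (Real.exp (-s / 2 * (x ⬝ᵥ x))) ∂gaussianPi ι 1 =
      .ofReal (Real.exp (-awgnCapacity (Fintype.card ι) s)) := by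
  simp only [dotProduct, ← sq, Finset.mul_sum, Real.exp_sum,
    ENNReal.ofReal_prod_of_nonneg fun _ _ => (Real.exp_pos _).le]
  rw [lintegral_prod_eval_pi (fun _ => gaussianReal 0 1)
    (f := fun _ t => .ofReal (Real.exp (-s / 2 * t ^ 2))) fun _ => by fun_prop]
  simp only [lintegral_exp_neg_sq_gaussianReal hs, Finset.prod_const, Finset.card_univ]
  rw [← ENNReal.ofReal_pow (Real.exp_pos _).le, ← Real.exp_nat_mul, awgnCapacity]
  ring_nf

lemma gaussianReal_map_affine (m : ℝ) (σ : ℝ≥0) :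
    (gaussianReal 0 1).map (fun t => m + σ * t) = gaussianReal m (σ ^ 2) := by
  have h := gaussianReal_map_const_mul (μ := 0) (v := 1) σ
  have hcomp : (fun t : ℝ => m + σ * t) = (m + ·) ∘ (σ * ·) := rfl
  rw [hcomp, ← Measure.map_map (by fun_prop) (by fun_prop), h, gaussianReal_map_const_add]
  congr 1
  · ring
  · ext; simp

lemma gaussianReal_eq_withDensity {σ : ℝ≥0} (hσ : σ ≠ 0) (m : ℝ) :
    gaussianReal m (σ ^ 2) = (gaussianReal 0 (1 + σ ^ 2)).withDensity fun y =>
      .ofReal (Real.exp (Real.log (1 + ((σ : ℝ) ^ 2)⁻¹) / 2 +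
        y ^ 2 / (2 * (1 + (σ : ℝ) ^ 2)) - (y - m) ^ 2 / (2 * (σ : ℝ) ^ 2))) := by
  have : (0 : ℝ) < σ := by positivity
  rw [gaussianReal_of_var_ne_zero _ (by positivity), gaussianReal_of_var_ne_zero _ (by positivity),
    ← withDensity_mul _ (measurable_gaussianPDF _ _) (by fun_prop)]
  congr 1
  funext y
  rw [Pi.mul_apply, gaussianPDF, gaussianPDF, ← ENNReal.ofReal_mul (gaussianPDFReal_nonneg _ _ _)]
  congr 1
  have hsqrt : (√(2 * Real.pi * σ ^ 2))⁻¹ =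
      (√(2 * Real.pi * (1 + σ ^ 2)))⁻¹ * √(1 + ((σ : ℝ) ^ 2)⁻¹) := by
    rw [← Real.sqrt_inv, ← Real.sqrt_inv, ← Real.sqrt_mul (by positivity)]
    congr 1
    field_simp
    ring
  calc gaussianPDFReal m (σ ^ 2) y
      = (√(2 * Real.pi * σ ^ 2))⁻¹ * Real.exp (-(y - m) ^ 2 / (2 * σ ^ 2)) := by
        simp [gaussianPDFReal]
    _ = (√(2 * Real.pi * (1 + σ ^ 2)))⁻¹ * (Real.exp (Real.log (1 + ((σ : ℝ) ^ 2)⁻¹) / 2) *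
          Real.exp (-(y - m) ^ 2 / (2 * σ ^ 2))) := by
        rw [hsqrt, ← Real.log_sqrt (by positivity), Real.exp_log (by positivity), mul_assoc]
    _ = (√(2 * Real.pi * (1 + σ ^ 2)))⁻¹ * Real.exp (-y ^ 2 / (2 * (1 + σ ^ 2)) +
          (Real.log (1 + ((σ : ℝ) ^ 2)⁻¹) / 2 + y ^ 2 / (2 * (1 + (σ : ℝ) ^ 2)) -
            (y - m) ^ 2 / (2 * (σ : ℝ) ^ 2))) := by
        rw [← Real.exp_add]
        ring_nf
    _ = _ := by
        rw [Real.exp_add, ← mul_assoc]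
        simp [gaussianPDFReal]

lemma infoDensity_eq_sum (σ : ℝ≥0) (x y : ι → ℝ) :
    infoDensity σ x y = ∑ i, (Real.log (1 + ((σ : ℝ) ^ 2)⁻¹) / 2 +
      y i ^ 2 / (2 * (1 + (σ : ℝ) ^ 2)) - (y i - x i) ^ 2 / (2 * (σ : ℝ) ^ 2)) := by
  simp only [infoDensity, awgnCapacity, dotProduct, Pi.sub_apply, ← sq, Finset.sum_sub_distrib,
    Finset.sum_add_distrib, Finset.sum_div, Finset.sum_const, Finset.card_univ, nsmul_eq_mul]
  ring

lemma gaussianPi_map_add_smul {σ : ℝ≥0} (hσ : σ ≠ 0) (x : ι → ℝ) :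
    (gaussianPi ι 1).map (fun z => x + (σ : ℝ) • z) =
      (gaussianPi ι (1 + σ ^ 2)).withDensity fun y => .ofReal (Real.exp (infoDensity σ x y)) := by
  have (i : ι) : IsProbabilityMeasure ((gaussianReal 0 (1 + σ ^ 2)).withDensity fun t =>
      .ofReal (Real.exp (Real.log (1 + ((σ : ℝ) ^ 2)⁻¹) / 2 + t ^ 2 / (2 * (1 + (σ : ℝ) ^ 2)) -
        (t - x i) ^ 2 / (2 * (σ : ℝ) ^ 2)))) := by
    rw [← gaussianReal_eq_withDensity hσ]
    infer_instance
  have hmap (i : ι) : (gaussianReal 0 1).map (fun t => x i + σ * t) = gaussianReal (x i) (σ ^ 2) :=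
    gaussianReal_map_affine _ _
  have (i : ι) : SigmaFinite ((gaussianReal 0 1).map (fun t => x i + σ * t)) := by
    rw [hmap]; infer_instance
  calc (gaussianPi ι 1).map (fun z => x + (σ : ℝ) • z)
      = Measure.pi fun i => gaussianReal (x i) (σ ^ 2) := by
        simp only [← hmap]
        exact Measure.pi_map_pi (f := fun i t => x i + σ * t) fun i => by fun_prop
    _ = _ := by
        simp only [gaussianReal_eq_withDensity hσ, infoDensity_eq_sum, Real.exp_sum,
          ENNReal.ofReal_prod_of_nonneg fun _ _ => (Real.exp_pos _).le]
        exact pi_withDensity _ fun i => by fun_prop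

lemma measurePreserving_add_smul_gaussianPi (σ : ℝ≥0) :
    MeasurePreserving (fun p : (ι → ℝ) × (ι → ℝ) => p.1 + (σ : ℝ) • p.2)
      ((gaussianPi ι 1).prod (gaussianPi ι 1)) (gaussianPi ι (1 + σ ^ 2)) := by
  have hcoord : MeasurePreserving (fun p : ℝ × ℝ => p.1 + σ * p.2)
      ((gaussianReal 0 1).prod (gaussianReal 0 1)) (gaussianReal 0 (1 + σ ^ 2)) := by
    refine ⟨by fun_prop, ?_⟩
    have hmap : (gaussianReal 0 1).map (fun t : ℝ => σ * t) = gaussianReal 0 (σ ^ 2) := by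
      simpa using gaussianReal_map_affine 0 σ
    have hconv := gaussianReal_conv_gaussianReal (m₁ := 0) (m₂ := 0) (v₁ := 1) (v₂ := σ ^ 2)
    nth_rw 1 [add_zero, Measure.conv, ← hmap, ← Measure.map_id (μ := gaussianReal 0 1),
      Measure.map_prod_map _ _ (by fun_prop) (by fun_prop),
      Measure.map_map (by fun_prop) (by fun_prop)] at hconv
    exact hconv
  have hzip := (measurePreserving_arrowProdEquivProdArrow ℝ ℝ ι (fun _ => gaussianReal 0 1)
    fun _ => gaussianReal 0 1).symm
  exact (measurePreserving_pi _ _ fun _ => hcoord).comp hzip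

lemma infoDensity_self_add_smul {σ : ℝ≥0} (hσ : σ ≠ 0) (x z : ι → ℝ) :
    infoDensity σ x (x + (σ : ℝ) • z) = awgnCapacity (Fintype.card ι) ((σ : ℝ) ^ 2)⁻¹ +
      (x + (σ : ℝ) • z) ⬝ᵥ (x + (σ : ℝ) • z) / (2 * (1 + (σ : ℝ) ^ 2)) - z ⬝ᵥ z / 2 := by
  have : (σ : ℝ) ≠ 0 := NNReal.coe_ne_zero.2 hσ
  rw [infoDensity, add_sub_cancel_left, smul_dotProduct, dotProduct_smul, smul_eq_mul, smul_eq_mul]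
  field_simp

lemma integrable_add_smul_dotProduct_self (σ : ℝ≥0) :
    Integrable (fun p : (ι → ℝ) × (ι → ℝ) => (p.1 + (σ : ℝ) • p.2) ⬝ᵥ (p.1 + (σ : ℝ) • p.2))
      ((gaussianPi ι 1).prod (gaussianPi ι 1)) :=
  (measurePreserving_add_smul_gaussianPi σ).integrable_comp_of_integrable
    (integrable_dotProduct_self_gaussianPi _)

lemma integrable_infoDensity {σ : ℝ≥0} (hσ : σ ≠ 0) :
    Integrable (fun p : (ι → ℝ) × (ι → ℝ) => infoDensity σ p.1 (p.1 + (σ : ℝ) • p.2))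
      ((gaussianPi ι 1).prod (gaussianPi ι 1)) := by
  simp only [infoDensity_self_add_smul hσ]
  exact ((integrable_const _).add ((integrable_add_smul_dotProduct_self σ).div_const _)).sub
    (((integrable_dotProduct_self_gaussianPi 1).comp_snd _).div_const 2)

lemma integral_infoDensity {σ : ℝ≥0} (hσ : σ ≠ 0) :
    ∫ p, infoDensity σ p.1 (p.1 + (σ : ℝ) • p.2) ∂(gaussianPi ι 1).prod (gaussianPi ι 1) =
      awgnCapacity (Fintype.card ι) ((σ : ℝ) ^ 2)⁻¹ := by
  have hsignal : ∫ p, (p.1 + (σ : ℝ) • p.2) ⬝ᵥ (p.1 + (σ : ℝ) • p.2)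
      ∂(gaussianPi ι 1).prod (gaussianPi ι 1) = Fintype.card ι * (1 + (σ : ℝ) ^ 2) := by
    rw [← integral_map (f := fun y => y ⬝ᵥ y) (by fun_prop) (by fun_prop),
      (measurePreserving_add_smul_gaussianPi σ).map_eq, integral_dotProduct_self_gaussianPi]
    simp
  have hnoise : ∫ p, p.2 ⬝ᵥ p.2 ∂(gaussianPi ι 1).prod (gaussianPi ι 1) = Fintype.card ι := by
    rw [integral_fun_snd (fun z : ι → ℝ => z ⬝ᵥ z)]
    simp [integral_dotProduct_self_gaussianPi]
  have hY := (integrable_add_smul_dotProduct_self (ι := ι) σ).div_const (2 * (1 + (σ : ℝ) ^ 2))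
  have hZ := ((integrable_dotProduct_self_gaussianPi (ι := ι) 1).comp_snd
    (gaussianPi ι 1)).div_const 2
  have hCY : Integrable (fun p : (ι → ℝ) × (ι → ℝ) =>
      awgnCapacity (Fintype.card ι) ((σ : ℝ) ^ 2)⁻¹ +
        (p.1 + (σ : ℝ) • p.2) ⬝ᵥ (p.1 + (σ : ℝ) • p.2) / (2 * (1 + (σ : ℝ) ^ 2)))
      ((gaussianPi ι 1).prod (gaussianPi ι 1)) := (integrable_const _).add hY
  simp only [infoDensity_self_add_smul hσ]
  rw [integral_sub hCY hZ, integral_add (integrable_const _) hY, integral_div, integral_div,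
    hsignal, hnoise, integral_const, probReal_univ, one_smul]
  field_simp
  ring

lemma integrable_infoDensity_permute {σ : ℝ≥0} (hσ : σ ≠ 0) (e : Equiv.Perm ι) :
    Integrable (fun p => infoDensity σ (p.1 ∘ e) (p.1 ∘ e + (σ : ℝ) • p.2))
      ((gaussianPi ι 1).prod (gaussianPi ι 1)) :=
  (measurePreserving_permute e).integrable_comp_of_integrable (integrable_infoDensity hσ)

lemma integral_infoDensity_permute {σ : ℝ≥0} (hσ : σ ≠ 0) (e : Equiv.Perm ι) :
    ∫ p, infoDensity σ (p.1 ∘ e) (p.1 ∘ e + (σ : ℝ) • p.2)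
        ∂(gaussianPi ι 1).prod (gaussianPi ι 1) =
      awgnCapacity (Fintype.card ι) ((σ : ℝ) ^ 2)⁻¹ := by
  have hmeas : Measurable fun p : (ι → ℝ) × (ι → ℝ) =>
      infoDensity σ p.1 (p.1 + (σ : ℝ) • p.2) := by fun_prop
  rw [← integral_infoDensity hσ]
  conv_rhs => rw [← (measurePreserving_permute e).map_eq,
    integral_map (by fun_prop) hmeas.aestronglyMeasurable]

end Gaussian

section Moments

variable {ι : Type*} [Fintype ι]

lemma memLp_dotProduct_gaussianPi (c : ι → ℝ) :
    MemLp (fun z => c ⬝ᵥ z) 2 (gaussianPi ι 1) :=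
  memLp_finsetSum _ fun i _ => (memLp_eval_gaussianPi 1 i 2).const_mul (c i)

lemma integral_sq_dotProduct_gaussianPi (c : ι → ℝ) :
    ∫ z, (c ⬝ᵥ z) ^ 2 ∂gaussianPi ι 1 = c ⬝ᵥ c := by
  have hint (i : ι) : Integrable (fun z : ι → ℝ => c i * z i) (gaussianPi ι 1) :=
    ((memLp_eval_gaussianPi 1 i 1).integrable le_rfl).const_mul _
  have hmean : ∫ z, c ⬝ᵥ z ∂gaussianPi ι 1 = 0 := by
    simp only [dotProduct]
    rw [integral_finsetSum _ fun i _ => hint i]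
    refine Finset.sum_eq_zero fun i _ => ?_
    rw [integral_const_mul, integral_comp_eval (μ := fun _ : ι => gaussianReal 0 1)
      (f := fun t => t) (by fun_prop), integral_id_gaussianReal, mul_zero]
  have hvar := variance_sum_pi (μ := fun _ : ι => gaussianReal 0 1) (X := fun i t => c i * t)
    fun i => (memLp_id_gaussianReal 2).const_mul (c i)
  rw [← variance_of_integral_eq_zero (by fun_prop) hmean]
  rw [Finset.sum_fn] at hvar
  refine hvar.trans (Finset.sum_congr rfl fun i _ => ?_)
  rw [variance_const_mul, variance_fun_id_gaussianReal, NNReal.coe_one, mul_one, sq]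

lemma memLp_eval_mul_eval_gaussianPi (i j : ι) :
    MemLp (fun x : ι → ℝ => x i * x j) 2 (gaussianPi ι 1) := by
  have : ENNReal.HolderTriple (4 : ℝ≥0) (4 : ℝ≥0) 2 := ⟨by
    rw [← ENNReal.coe_inv (by norm_num), ← ENNReal.coe_add,
      ← ENNReal.coe_ofNat, ← ENNReal.coe_inv (by norm_num)]
    congr 1
    norm_num⟩
  exact (memLp_eval_gaussianPi 1 j 4).mul' (memLp_eval_gaussianPi 1 i 4)

lemma integral_sq_eval_mul_eval_gaussianPi {i j : ι} (hij : i ≠ j) :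
    ∫ x, (x i * x j) ^ 2 ∂gaussianPi ι 1 = 1 := by
  have hind : IndepFun (fun x : ι → ℝ => x i ^ 2) (fun x => x j ^ 2) (gaussianPi ι 1) :=
    (iIndepFun_pi (μ := fun _ : ι => gaussianReal 0 1) (X := fun _ t => t ^ 2)
      fun _ => by fun_prop).indepFun hij
  simp only [mul_pow]
  rw [hind.integral_fun_mul_eq_mul_integral
    (memLp_eval_gaussianPi 1 i 2).integrable_sq.aestronglyMeasurable
    (memLp_eval_gaussianPi 1 j 2).integrable_sq.aestronglyMeasurable]
  simp [integral_eval_sq_gaussianPi]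

lemma integral_eval_mul_mul_eval_mul_le [DecidableEq ι] {e : Equiv.Perm ι} (he : ∀ i, e i ≠ i)
    (i j : ι) :
    ∫ x, (x (e i) * x i) * (x (e j) * x j) ∂gaussianPi ι 1 ≤
      (if j = i then 1 else 0) + if j = e.symm i then 1 else 0 := by
  by_cases hij : j = i ∨ j = e.symm i
  · have hL2 (k : ι) := memLp_eval_mul_eval_gaussianPi (e k) k
    calc ∫ x, (x (e i) * x i) * (x (e j) * x j) ∂gaussianPi ι 1
        ≤ ∫ x, ((x (e i) * x i) ^ 2 + (x (e j) * x j) ^ 2) / 2 ∂gaussianPi ι 1 :=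
          integral_mono ((hL2 i).integrable_mul (hL2 j))
            (((hL2 i).integrable_sq.add (hL2 j).integrable_sq).div_const 2) fun x => by
              dsimp only [Pi.add_apply]
              linarith [two_mul_le_add_sq (x (e i) * x i) (x (e j) * x j)]
      _ = 1 := by
          rw [integral_div, integral_add (hL2 i).integrable_sq (hL2 j).integrable_sq,
            integral_sq_eval_mul_eval_gaussianPi (he i),
            integral_sq_eval_mul_eval_gaussianPi (he j)]
          norm_num
      _ ≤ _ := by
          rcases hij with hij | hij <;> simp only [hij, if_true] <;> split_ifs <;> norm_num
  · obtain ⟨hji, hji'⟩ := not_or.1 hij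
    have heji : e j ≠ i := fun h => hji' (e.eq_symm_apply.2 h)
    refine (integral_eq_zero_of_odd_coordinate 1 i fun x => ?_).trans_le (by positivity)
    simp only [Function.update_self, Function.update_of_ne (he i), Function.update_of_ne hji,
      Function.update_of_ne heji]
    ring

lemma integral_sq_dotProduct_comp_perm_le {e : Equiv.Perm ι} (he : ∀ i, e i ≠ i) :
    ∫ x, ((x ∘ e) ⬝ᵥ x) ^ 2 ∂gaussianPi ι 1 ≤ 2 * Fintype.card ι := by
  classical
  have hint (i j : ι) : Integrable (fun x => (x (e i) * x i) * (x (e j) * x j)) (gaussianPi ι 1) :=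
    (memLp_eval_mul_eval_gaussianPi _ _).integrable_mul (memLp_eval_mul_eval_gaussianPi _ _)
  calc ∫ x, ((x ∘ e) ⬝ᵥ x) ^ 2 ∂gaussianPi ι 1
      = ∑ i, ∑ j, ∫ x, (x (e i) * x i) * (x (e j) * x j) ∂gaussianPi ι 1 := by
        simp only [dotProduct, sq, Finset.sum_mul_sum, Function.comp_apply]
        rw [integral_finsetSum _ fun i _ => integrable_finsetSum _ fun j _ => hint i j]
        exact Finset.sum_congr rfl fun i _ => integral_finsetSum _ fun j _ => hint i j
    _ ≤ ∑ i, ∑ j, ((if j = i then 1 else 0) + if j = e.symm i then 1 else 0) := by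
        gcongr with i _ j _
        exact integral_eval_mul_mul_eval_mul_le he i j
    _ = 2 * Fintype.card ι := by
        simp [Finset.sum_add_distrib, two_mul]

lemma lintegral_ofReal_abs_le_sqrt {Ω : Type*} {mΩ : MeasurableSpace Ω} {μ : Measure Ω}
    [IsProbabilityMeasure μ] {f : Ω → ℝ} (hf : Measurable f) {b : ℝ} (hb0 : 0 ≤ b)
    (hb : ∫⁻ ω, .ofReal (f ω ^ 2) ∂μ ≤ .ofReal b) : ∫⁻ ω, .ofReal |f ω| ∂μ ≤ .ofReal √b := by
  have habs (t : ℝ) : ‖t‖ₑ ^ (2 : ℝ) = .ofReal (t ^ 2) := by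
    rw [Real.enorm_eq_ofReal_abs, ENNReal.rpow_two, ← ENNReal.ofReal_pow (abs_nonneg t), sq_abs]
  calc ∫⁻ ω, .ofReal |f ω| ∂μ
      = eLpNorm f 1 μ := by simp only [eLpNorm_one_eq_lintegral_enorm, Real.enorm_eq_ofReal_abs]
    _ ≤ eLpNorm f 2 μ :=
        eLpNorm_le_eLpNorm_of_exponent_le one_le_two hf.aestronglyMeasurable
    _ = (∫⁻ ω, .ofReal (f ω ^ 2) ∂μ) ^ (1 / 2 : ℝ) := by
        rw [eLpNorm_eq_lintegral_rpow_enorm_toReal two_ne_zero ENNReal.ofNat_ne_top]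
        simp only [ENNReal.toReal_ofNat, habs]
    _ ≤ .ofReal √b := by
        rw [Real.sqrt_eq_rpow, ← ENNReal.ofReal_rpow_of_nonneg hb0 (by norm_num)]
        gcongr

lemma lintegral_abs_dotProduct_gaussianPi_prod_le (e : Equiv.Perm ι) :
    ∫⁻ p, .ofReal |(p.1 ∘ e) ⬝ᵥ p.2| ∂(gaussianPi ι 1).prod (gaussianPi ι 1) ≤
      .ofReal √(Fintype.card ι) := by
  refine lintegral_ofReal_abs_le_sqrt (by fun_prop) (Nat.cast_nonneg _) (le_of_eq ?_)
  have hz (x : ι → ℝ) :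
      ∫⁻ z, .ofReal ((x ⬝ᵥ z) ^ 2) ∂gaussianPi ι 1 = .ofReal (x ⬝ᵥ x) := by
    rw [← integral_sq_dotProduct_gaussianPi,
      ofReal_integral_eq_lintegral_ofReal (memLp_dotProduct_gaussianPi x).integrable_sq
        (ae_of_all _ fun z => sq_nonneg _)]
  rw [lintegral_prod _ (by fun_prop)]
  simp only [hz]
  rw [(measurePreserving_comp_perm 1 e).lintegral_comp (f := fun x => .ofReal (x ⬝ᵥ x))
    (by fun_prop), ← ofReal_integral_eq_lintegral_ofReal
    (integrable_dotProduct_self_gaussianPi 1) (ae_of_all _ fun x => dotProduct_self_star_nonneg x),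
    integral_dotProduct_self_gaussianPi, NNReal.coe_one, mul_one]

end Moments

section PermutedChannel

variable {ι κ : Type*} [Fintype ι]

/-- The logarithm of the likelihood ratio of the permutations `k` and `g`, given the signal `p.1`
and the measurement made with permutation `g` and noise `p.2`. -/
noncomputable def logLikelihoodRatio (π : κ → Equiv.Perm ι) (σ : ℝ≥0) (g k : κ)
    (p : (ι → ℝ) × (ι → ℝ)) : ℝ :=
  infoDensity σ (p.1 ∘ π k) (p.1 ∘ π g + (σ : ℝ) • p.2) -
    infoDensity σ (p.1 ∘ π g) (p.1 ∘ π g + (σ : ℝ) • p.2)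

@[fun_prop]
lemma measurable_logLikelihoodRatio (π : κ → Equiv.Perm ι) (σ : ℝ≥0) (g k : κ) :
    Measurable (logLikelihoodRatio π σ g k) := by
  unfold logLikelihoodRatio
  fun_prop

lemma logLikelihoodRatio_self (π : κ → Equiv.Perm ι) (σ : ℝ≥0) (g : κ) (p : (ι → ℝ) × (ι → ℝ)) :
    logLikelihoodRatio π σ g g p = 0 :=
  sub_self _

variable [Fintype κ]

/-- The joint law of `(X, X ∘ π k + σ Z)` for a uniformly random index `k`, with independent
standard Gaussian signal `X` and noise `Z`. The measurement model of `mraJoint1` is the case of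
cyclic shifts. -/
noncomputable def permutedLaw (π : κ → Equiv.Perm ι) (σ : ℝ) : Measure ((ι → ℝ) × (ι → ℝ)) :=
  (Fintype.card κ : ℝ≥0∞)⁻¹ • ∑ k,
    ((gaussianPi ι 1).prod (gaussianPi ι 1)).map fun p => (p.1, p.1 ∘ π k + σ • p.2)

/-- The density of `permutedLaw π σ` relative to the product of its marginals: the average over
`k` of the likelihood ratios of the individual channels. -/
noncomputable def permutedDensity (π : κ → Equiv.Perm ι) (σ : ℝ≥0) (p : (ι → ℝ) × (ι → ℝ)) : ℝ :=
  (Fintype.card κ : ℝ)⁻¹ * ∑ k, Real.exp (infoDensity σ (p.1 ∘ π k) p.2)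

/-- Minus the logarithm of the posterior probability of the true permutation `g`, given the signal
`p.1` and the measurement made with noise `p.2`. Its mean is the conditional entropy of the
permutation given signal and measurement. -/
noncomputable def permSurprisal (π : κ → Equiv.Perm ι) (σ : ℝ≥0) (g : κ)
    (p : (ι → ℝ) × (ι → ℝ)) : ℝ :=
  Real.log (∑ k, Real.exp (logLikelihoodRatio π σ g k p))

section

variable (π : κ → Equiv.Perm ι) (σ : ℝ≥0)

@[fun_prop]
lemma measurable_permutedDensity : Measurable (permutedDensity π σ) := by
  unfold permutedDensity
  fun_prop

@[fun_prop]
lemma measurable_permSurprisal (g : κ) : Measurable (permSurprisal π σ g) := by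
  unfold permSurprisal
  fun_prop

lemma permutedDensity_pos [Nonempty κ] (p : (ι → ℝ) × (ι → ℝ)) : 0 < permutedDensity π σ p := by
  unfold permutedDensity
  positivity

lemma card_inv_smul_sum_const [Nonempty κ] {Ω : Type*} [MeasurableSpace Ω] (μ : Measure Ω) :
    (Fintype.card κ : ℝ≥0∞)⁻¹ • ∑ _k : κ, μ = μ := by
  rw [Finset.sum_const, Finset.card_univ, ← Nat.cast_smul_eq_nsmul ℝ≥0∞, smul_smul,
    ENNReal.inv_mul_cancel (by simp) (ENNReal.natCast_ne_top _), one_smul]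

lemma permutedLaw_map_fst [Nonempty κ] (σ : ℝ) :
    (permutedLaw π σ).map Prod.fst = gaussianPi ι 1 := by
  have hk (k : κ) : (((gaussianPi ι 1).prod (gaussianPi ι 1)).map
      fun p => (p.1, p.1 ∘ π k + σ • p.2)).map Prod.fst = gaussianPi ι 1 := by
    rw [Measure.map_map (by fun_prop) (by fun_prop)]
    exact measurePreserving_fst.map_eq
  rw [permutedLaw, Measure.map_smul, Measure.map_finset_sum' (by fun_prop)]
  simp only [hk, card_inv_smul_sum_const]

lemma permutedLaw_map_snd [Nonempty κ] :
    (permutedLaw π σ).map Prod.snd = gaussianPi ι (1 + σ ^ 2) := by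
  have hk (k : κ) : (((gaussianPi ι 1).prod (gaussianPi ι 1)).map
      fun p => (p.1, p.1 ∘ π k + (σ : ℝ) • p.2)).map Prod.snd = gaussianPi ι (1 + σ ^ 2) := by
    rw [Measure.map_map (by fun_prop) (by fun_prop)]
    exact ((measurePreserving_add_smul_gaussianPi σ).comp (measurePreserving_permute (π k))).map_eq
  rw [permutedLaw, Measure.map_smul, Measure.map_finset_sum' (by fun_prop)]
  simp only [hk, card_inv_smul_sum_const]

variable {σ}

lemma permutedLaw_eq_withDensity [Nonempty κ] (hσ : σ ≠ 0) :
    permutedLaw π σ = ((gaussianPi ι 1).prod (gaussianPi ι (1 + σ ^ 2))).withDensity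
      fun p => .ofReal (permutedDensity π σ p) := by
  have hk (k : κ) := map_prodMk_eq_withDensity (μ := gaussianPi ι 1) (ν := gaussianPi ι 1)
    (ρ := gaussianPi ι (1 + σ ^ 2)) (f := fun p => p.1 ∘ π k + (σ : ℝ) • p.2)
    (h := fun p => .ofReal (Real.exp (infoDensity σ (p.1 ∘ π k) p.2))) (by fun_prop) (by fun_prop)
    fun x => gaussianPi_map_add_smul hσ (x ∘ π k)
  simp only [permutedLaw, hk]
  rw [sum_withDensity _ (by fun_prop), ← withDensity_smul _ (by fun_prop)]
  congr 1
  funext p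
  rw [permutedDensity, ENNReal.ofReal_mul (by positivity),
    ENNReal.ofReal_sum_of_nonneg fun _ _ => (Real.exp_pos _).le,
    ENNReal.ofReal_inv_of_pos (by positivity), ENNReal.ofReal_natCast, Pi.smul_apply, smul_eq_mul]

instance [Nonempty κ] (σ : ℝ) : IsProbabilityMeasure (permutedLaw π σ) := by
  rw [← Measure.isProbabilityMeasure_map_iff measurable_fst.aemeasurable, permutedLaw_map_fst]
  infer_instance

lemma log_permutedDensity [Nonempty κ] (g : κ) (p : (ι → ℝ) × (ι → ℝ)) :
    Real.log (permutedDensity π σ (p.1, p.1 ∘ π g + (σ : ℝ) • p.2)) =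
      infoDensity σ (p.1 ∘ π g) (p.1 ∘ π g + (σ : ℝ) • p.2) - Real.log (Fintype.card κ) +
        permSurprisal π σ g p := by
  have hsum : ∑ k, Real.exp (infoDensity σ (p.1 ∘ π k) (p.1 ∘ π g + (σ : ℝ) • p.2)) =
      Real.exp (infoDensity σ (p.1 ∘ π g) (p.1 ∘ π g + (σ : ℝ) • p.2)) *
        ∑ k, Real.exp (logLikelihoodRatio π σ g k p) := by
    simp only [Finset.mul_sum, ← Real.exp_add, logLikelihoodRatio, add_sub_cancel]
  rw [permutedDensity, hsum, Real.log_mul (by positivity) (by positivity),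
    Real.log_mul (by positivity) (by positivity), Real.log_inv, Real.log_exp, permSurprisal]
  ring

lemma permSurprisal_nonneg (g : κ) (p : (ι → ℝ) × (ι → ℝ)) : 0 ≤ permSurprisal π σ g p := by
  refine Real.log_nonneg ?_
  calc 1 = Real.exp (logLikelihoodRatio π σ g g p) := by
        rw [logLikelihoodRatio_self, Real.exp_zero]
    _ ≤ _ := Finset.single_le_sum (f := fun k => Real.exp (logLikelihoodRatio π σ g k p))
      (fun _ _ => (Real.exp_pos _).le) (Finset.mem_univ g)

lemma integrable_log_permutedDensity [Nonempty κ] (hσ : σ ≠ 0) {g : κ}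
    (hg : Integrable (permSurprisal π σ g) ((gaussianPi ι 1).prod (gaussianPi ι 1))) :
    Integrable (fun p => Real.log (permutedDensity π σ p))
      (((gaussianPi ι 1).prod (gaussianPi ι 1)).map
        fun p => (p.1, p.1 ∘ π g + (σ : ℝ) • p.2)) := by
  rw [integrable_map_measure (measurable_permutedDensity π σ).log.aestronglyMeasurable
    (by fun_prop)]
  exact (((integrable_infoDensity_permute hσ (π g)).sub (integrable_const _)).add hg).congr
    (ae_of_all _ fun p => (log_permutedDensity π g p).symm)

lemma integral_log_permutedDensity [Nonempty κ] (hσ : σ ≠ 0) {g : κ}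
    (hg : Integrable (permSurprisal π σ g) ((gaussianPi ι 1).prod (gaussianPi ι 1))) :
    ∫ p, Real.log (permutedDensity π σ p) ∂((gaussianPi ι 1).prod (gaussianPi ι 1)).map
        (fun p => (p.1, p.1 ∘ π g + (σ : ℝ) • p.2)) =
      awgnCapacity (Fintype.card ι) ((σ : ℝ) ^ 2)⁻¹ - Real.log (Fintype.card κ) +
        ∫ p, permSurprisal π σ g p ∂(gaussianPi ι 1).prod (gaussianPi ι 1) := by
  have hinfo := integrable_infoDensity_permute hσ (π g)
  have hsub : Integrable (fun p => infoDensity σ (p.1 ∘ π g) (p.1 ∘ π g + (σ : ℝ) • p.2) -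
      Real.log (Fintype.card κ)) ((gaussianPi ι 1).prod (gaussianPi ι 1)) :=
    hinfo.sub (integrable_const _)
  rw [integral_map (by fun_prop) (measurable_permutedDensity π σ).log.aestronglyMeasurable]
  simp only [log_permutedDensity]
  rw [integral_add hsub hg, integral_sub hinfo (integrable_const _),
    integral_infoDensity_permute hσ, integral_const, probReal_univ, one_smul]

lemma mutualInfo_permutedLaw [Nonempty κ] (hσ : σ ≠ 0)
    (hint : ∀ g, Integrable (permSurprisal π σ g) ((gaussianPi ι 1).prod (gaussianPi ι 1))) :
    mutualInfo (permutedLaw π σ) =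
      awgnCapacity (Fintype.card ι) ((σ : ℝ) ^ 2)⁻¹ - Real.log (Fintype.card κ) +
        (Fintype.card κ : ℝ)⁻¹ * ∑ g, ∫ p, permSurprisal π σ g p
          ∂(gaussianPi ι 1).prod (gaussianPi ι 1) := by
  have hcard : (Fintype.card κ : ℝ) ≠ 0 := by positivity
  rw [mutualInfo_eq_integral_log (permutedLaw_map_fst π σ) (permutedLaw_map_snd π σ)
    (measurable_permutedDensity π σ) (fun p => (permutedDensity_pos π σ p).le)
    (permutedLaw_eq_withDensity π hσ), permutedLaw, integral_smul_measure,
    integral_finsetSum_measure fun g _ => integrable_log_permutedDensity π hσ (hint g)]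
  simp only [integral_log_permutedDensity π hσ (hint _), Finset.sum_add_distrib,
    Finset.sum_const, Finset.card_univ, nsmul_eq_mul, ENNReal.toReal_inv, ENNReal.toReal_natCast,
    smul_eq_mul, mul_add, inv_mul_cancel_left₀ hcard]

lemma mutualInfo_permutedLaw_nonneg [Nonempty κ] (hσ : σ ≠ 0) :
    0 ≤ mutualInfo (permutedLaw π σ) := by
  refine mutualInfo_nonneg ?_
  rw [permutedLaw_map_fst, permutedLaw_map_snd, permutedLaw_eq_withDensity π hσ]
  exact withDensity_absolutelyContinuous _ _

end

end PermutedChannel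

section SurprisalBound

lemma log_one_add_sum_le {κ : Type*} {s : Finset κ} {a b : κ → ℝ} {w : ℝ} (hw : 0 ≤ w)
    (ha : ∀ k, 0 ≤ a k) (hab : ∀ k, a k ≤ Real.exp w * b k) :
    Real.log (1 + ∑ k ∈ s, a k) ≤ w + ∑ k ∈ s, b k := by
  have hb (k : κ) : 0 ≤ b k := nonneg_of_mul_nonneg_right ((ha k).trans (hab k)) (Real.exp_pos w)
  have hA : 0 ≤ ∑ k ∈ s, a k := Finset.sum_nonneg fun k _ => ha k
  have hB : 0 ≤ ∑ k ∈ s, b k := Finset.sum_nonneg fun k _ => hb k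
  have hAB : ∑ k ∈ s, a k ≤ Real.exp w * ∑ k ∈ s, b k := by
    rw [Finset.mul_sum]
    exact Finset.sum_le_sum fun k _ => hab k
  calc Real.log (1 + ∑ k ∈ s, a k)
      ≤ Real.log (Real.exp w * (1 + ∑ k ∈ s, b k)) :=
        Real.log_le_log (by positivity) (by linarith [Real.one_le_exp hw])
    _ = w + Real.log (1 + ∑ k ∈ s, b k) := by
        rw [Real.log_mul (by positivity) (by positivity), Real.log_exp]
    _ ≤ w + ∑ k ∈ s, b k := by
        gcongr
        linarith [Real.log_le_sub_one_of_pos (x := 1 + ∑ k ∈ s, b k) (by positivity)]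

variable {ι κ : Type*} [Fintype ι]

lemma integral_sq_comp_perm_dotProduct_comp_perm_le {e f : Equiv.Perm ι} (h : ∀ i, e i ≠ f i) :
    ∫ x, ((x ∘ e) ⬝ᵥ (x ∘ f)) ^ 2 ∂gaussianPi ι 1 ≤ 2 * Fintype.card ι := by
  have hcomp (x : ι → ℝ) : (x ∘ f) ∘ (e.trans f.symm) = x ∘ e := by
    ext i
    simp
  have hfree (i : ι) : (e.trans f.symm) i ≠ i := fun hi => h i (f.symm_apply_eq.1 hi)
  calc ∫ x, ((x ∘ e) ⬝ᵥ (x ∘ f)) ^ 2 ∂gaussianPi ι 1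
      = ∫ y, ((y ∘ (e.trans f.symm)) ⬝ᵥ y) ^ 2 ∂gaussianPi ι 1 := by
        simp only [← hcomp]
        have hf := measurePreserving_comp_perm (ι := ι) 1 f
        conv_rhs => rw [← hf.map_eq, integral_map hf.measurable.aemeasurable
          (Measurable.aestronglyMeasurable (by fun_prop))]
    _ ≤ _ := integral_sq_dotProduct_comp_perm_le hfree

lemma gaussianPi_lt_dotProduct_le [Nonempty ι] {e f : Equiv.Perm ι} (h : ∀ i, e i ≠ f i) {ε : ℝ}
    (hε : 0 < ε) :
    gaussianPi ι 1 {x | ε * Fintype.card ι < (x ∘ e) ⬝ᵥ (x ∘ f)} ≤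
      .ofReal (2 / (ε ^ 2 * Fintype.card ι)) := by
  have hL2 : Integrable (fun x => ((x ∘ e) ⬝ᵥ (x ∘ f)) ^ 2) (gaussianPi ι 1) :=
    (memLp_finsetSum _ fun i _ => memLp_eval_mul_eval_gaussianPi (e i) (f i)).integrable_sq
  have hmarkov := (mul_meas_ge_le_integral_of_nonneg (ae_of_all _ fun x => sq_nonneg _) hL2
    ((ε * Fintype.card ι) ^ 2)).trans (integral_sq_comp_perm_dotProduct_comp_perm_le h)
  calc gaussianPi ι 1 {x | ε * Fintype.card ι < (x ∘ e) ⬝ᵥ (x ∘ f)}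
      ≤ gaussianPi ι 1 {x | (ε * Fintype.card ι) ^ 2 ≤ ((x ∘ e) ⬝ᵥ (x ∘ f)) ^ 2} :=
        measure_mono (Set.ofPred_subset_ofPred.2 fun x hx => by gcongr)
    _ = .ofReal ((gaussianPi ι 1).real
          {x | (ε * Fintype.card ι) ^ 2 ≤ ((x ∘ e) ⬝ᵥ (x ∘ f)) ^ 2}) := by
        rw [ofReal_measureReal]
    _ ≤ .ofReal (2 * Fintype.card ι / (ε * Fintype.card ι) ^ 2) := by
        gcongr
        rw [le_div_iff₀' (by positivity)]
        exact hmarkov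
    _ = .ofReal (2 / (ε ^ 2 * Fintype.card ι)) := by
        congr 1
        field_simp

variable (π : κ → Equiv.Perm ι) {σ : ℝ≥0}

lemma logLikelihoodRatio_eq (hσ : σ ≠ 0) (g k : κ) (x z : ι → ℝ) :
    logLikelihoodRatio π σ g k (x, z) =
      (σ : ℝ)⁻¹ ^ 2 * ((x ∘ π k) ⬝ᵥ (x ∘ π g) - x ⬝ᵥ x) + (σ : ℝ)⁻¹ * ((x ∘ π k) ⬝ᵥ z) -
        (σ : ℝ)⁻¹ * ((x ∘ π g) ⬝ᵥ z) := by
  have hσ' : (σ : ℝ) ≠ 0 := NNReal.coe_ne_zero.2 hσ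
  have hk := comp_equiv_dotProduct_comp_equiv x x (π k)
  have hg := comp_equiv_dotProduct_comp_equiv x x (π g)
  simp only [logLikelihoodRatio, infoDensity, sub_dotProduct, dotProduct_sub, add_dotProduct,
    dotProduct_add, smul_dotProduct, dotProduct_smul, smul_eq_mul, hk, hg,
    dotProduct_comm (x ∘ π g) (x ∘ π k), dotProduct_comm z]
  field_simp
  ring

lemma lintegral_exp_logLikelihoodRatio (hσ : σ ≠ 0) (g k : κ) (x : ι → ℝ) :
    ∫⁻ z, .ofReal (Real.exp (logLikelihoodRatio π σ g k (x, z))) ∂gaussianPi ι 1 = 1 := by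
  set d : ι → ℝ := (σ : ℝ)⁻¹ • (x ∘ π k - x ∘ π g) with hd
  have hLLR (z : ι → ℝ) : logLikelihoodRatio π σ g k (x, z) = -(d ⬝ᵥ d / 2) + d ⬝ᵥ z := by
    rw [logLikelihoodRatio_eq π hσ, hd]
    simp only [sub_dotProduct, dotProduct_sub, smul_dotProduct, dotProduct_smul, smul_eq_mul,
      comp_equiv_dotProduct_comp_equiv, dotProduct_comm (x ∘ π g) (x ∘ π k)]
    ring
  simp only [hLLR, Real.exp_add, ENNReal.ofReal_mul (Real.exp_pos _).le]
  rw [lintegral_const_mul _ (by fun_prop), lintegral_exp_dotProduct_gaussianPi,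
    ← ENNReal.ofReal_mul (Real.exp_pos _).le, ← Real.exp_add, neg_add_cancel, Real.exp_zero,
    ENNReal.ofReal_one]

lemma measurable_indicator_exp_logLikelihoodRatio (g k : κ) {s : Set (ι → ℝ)}
    (hs : MeasurableSet s) :
    Measurable fun p => s.indicator (fun _ => Real.exp (logLikelihoodRatio π σ g k p)) p.1 :=
  (measurable_logLikelihoodRatio π σ g k).exp.indicator (hs.preimage measurable_fst)

lemma lintegral_indicator_exp_logLikelihoodRatio (hσ : σ ≠ 0) (g k : κ) {s : Set (ι → ℝ)}
    (hs : MeasurableSet s) :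
    ∫⁻ p, .ofReal (s.indicator (fun _ => Real.exp (logLikelihoodRatio π σ g k p)) p.1)
        ∂(gaussianPi ι 1).prod (gaussianPi ι 1) = gaussianPi ι 1 s := by
  rw [lintegral_prod _ (measurable_indicator_exp_logLikelihoodRatio π g k
    hs).ennreal_ofReal.aemeasurable, ← lintegral_indicator_one hs]
  refine lintegral_congr fun x => ?_
  by_cases hx : x ∈ s
  · simp only [Set.indicator_of_mem hx, lintegral_exp_logLikelihoodRatio π hσ, Pi.one_apply]
  · simp only [Set.indicator_of_notMem hx, ENNReal.ofReal_zero, lintegral_zero]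

lemma lintegral_exp_dotProduct_sub_dotProduct_self (t a : ℝ) (e : Equiv.Perm ι) :
    ∫⁻ p, .ofReal (Real.exp (a - t ^ 2 * (p.1 ⬝ᵥ p.1) + t * ((p.1 ∘ e) ⬝ᵥ p.2)))
        ∂(gaussianPi ι 1).prod (gaussianPi ι 1) =
      .ofReal (Real.exp (a - awgnCapacity (Fintype.card ι) (t ^ 2))) := by
  have hz (x : ι → ℝ) :
      ∫⁻ z, .ofReal (Real.exp (a - t ^ 2 * (x ⬝ᵥ x) + t * ((x ∘ e) ⬝ᵥ z))) ∂gaussianPi ι 1 =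
        .ofReal (Real.exp a) * .ofReal (Real.exp (-t ^ 2 / 2 * (x ⬝ᵥ x))) := by
    simp only [Real.exp_add, ENNReal.ofReal_mul (Real.exp_pos _).le]
    rw [lintegral_const_mul _ (by fun_prop)]
    simp only [← smul_eq_mul (a := t), ← smul_dotProduct]
    rw [lintegral_exp_dotProduct_gaussianPi, ← ENNReal.ofReal_mul (Real.exp_pos _).le,
      ← ENNReal.ofReal_mul (Real.exp_pos _).le, ← Real.exp_add, ← Real.exp_add, smul_dotProduct,
      dotProduct_smul, comp_equiv_dotProduct_comp_equiv, smul_eq_mul, smul_eq_mul]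
    ring_nf
  rw [lintegral_prod _ (by fun_prop)]
  simp only [hz]
  rw [lintegral_const_mul _ (by fun_prop),
    lintegral_exp_neg_dotProduct_self_gaussianPi (sq_nonneg t),
    ← ENNReal.ofReal_mul (Real.exp_pos _).le, ← Real.exp_add, sub_eq_add_neg]

end SurprisalBound

section EntropyBound

variable {ι κ : Type*} [Fintype ι]

/-- A function whose product with `exp (σ⁻¹ |W| + m)` dominates the likelihood ratio of the
permutations `k` and `g`, where `W` is the component of the noise along the true signal
`p.1 ∘ π g`: the likelihood ratio itself if the two permuted signals have correlation above `r`,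
plus a variant with `r` in place of the correlation and without `W`, deflated by `exp m`.
Discounting `W`, which all `k` share, makes the mean small enough for a union bound over `k`. -/
noncomputable def deflatedRatio (π : κ → Equiv.Perm ι) (σ : ℝ≥0) (r m : ℝ) (g k : κ)
    (p : (ι → ℝ) × (ι → ℝ)) : ℝ :=
  {x | r < (x ∘ π k) ⬝ᵥ (x ∘ π g)}.indicator
    (fun _ => Real.exp (logLikelihoodRatio π σ g k p)) p.1 +
  Real.exp ((σ : ℝ)⁻¹ ^ 2 * r - m - (σ : ℝ)⁻¹ ^ 2 * (p.1 ⬝ᵥ p.1) +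
    (σ : ℝ)⁻¹ * ((p.1 ∘ π k) ⬝ᵥ p.2))

/-- A bound on the mean surprisal of one of `N` pairwise disjoint permutations of `n` coordinates
at signal-to-noise ratio `t ^ 2`, for an arbitrary relative correlation threshold `ε`.
The terms account for the noise along the true signal, the deflation exponent that makes the union
bound over the permutations at most `1`, the exceptionally correlated signals, and that `1`. -/
noncomputable def surprisalBound (n N : ℕ) (t ε : ℝ) : ℝ :=
  t * √n + max 0 (Real.log N + t ^ 2 * (ε * n) - awgnCapacity n (t ^ 2)) +
    N * (2 / (ε ^ 2 * n)) + 1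

section

variable (π : κ → Equiv.Perm ι) {σ : ℝ≥0}

lemma measurableSet_lt_dotProduct (r : ℝ) (e f : Equiv.Perm ι) :
    MeasurableSet {x : ι → ℝ | r < (x ∘ e) ⬝ᵥ (x ∘ f)} :=
  measurableSet_lt (by fun_prop) (by fun_prop)

@[fun_prop]
lemma measurable_deflatedRatio (r m : ℝ) (g k : κ) :
    Measurable (deflatedRatio π σ r m g k) :=
  (measurable_indicator_exp_logLikelihoodRatio π g k (measurableSet_lt_dotProduct _ _ _)).add
    (by fun_prop)

lemma deflatedRatio_nonneg (r m : ℝ) (g k : κ) (p : (ι → ℝ) × (ι → ℝ)) :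
    0 ≤ deflatedRatio π σ r m g k p :=
  add_nonneg (Set.indicator_nonneg (fun _ _ => (Real.exp_pos _).le) _) (Real.exp_pos _).le

lemma exp_logLikelihoodRatio_le (hσ : σ ≠ 0) (r : ℝ) {m : ℝ} (hm : 0 ≤ m) (g k : κ)
    (p : (ι → ℝ) × (ι → ℝ)) :
    Real.exp (logLikelihoodRatio π σ g k p) ≤
      Real.exp ((σ : ℝ)⁻¹ * |(p.1 ∘ π g) ⬝ᵥ p.2| + m) * deflatedRatio π σ r m g k p := by
  by_cases hr : r < (p.1 ∘ π k) ⬝ᵥ (p.1 ∘ π g)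
  · rw [deflatedRatio, Set.indicator_of_mem (by exact hr)]
    calc Real.exp (logLikelihoodRatio π σ g k p)
        ≤ Real.exp ((σ : ℝ)⁻¹ * |(p.1 ∘ π g) ⬝ᵥ p.2| + m) *
            Real.exp (logLikelihoodRatio π σ g k p) :=
          le_mul_of_one_le_left (Real.exp_pos _).le (Real.one_le_exp (by positivity))
      _ ≤ _ := by
          gcongr
          exact le_add_of_nonneg_right (Real.exp_pos _).le
  · rw [deflatedRatio, Set.indicator_of_notMem (by exact hr), zero_add, ← Real.exp_add,
      Real.exp_le_exp, logLikelihoodRatio_eq π hσ]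
    have hcorr := mul_le_mul_of_nonneg_left (not_lt.1 hr) (sq_nonneg (σ : ℝ)⁻¹)
    have hnoise := mul_le_mul_of_nonneg_left (neg_abs_le ((p.1 ∘ π g) ⬝ᵥ p.2))
      (inv_nonneg.2 σ.coe_nonneg)
    linarith

lemma lintegral_deflatedRatio_le [Nonempty ι] (hσ : σ ≠ 0) {g k : κ} (hgk : ∀ i, π k i ≠ π g i)
    {ε : ℝ} (hε : 0 < ε) (m : ℝ) :
    ∫⁻ p, .ofReal (deflatedRatio π σ (ε * Fintype.card ι) m g k p)
        ∂(gaussianPi ι 1).prod (gaussianPi ι 1) ≤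
      .ofReal (2 / (ε ^ 2 * Fintype.card ι) + Real.exp ((σ : ℝ)⁻¹ ^ 2 * (ε * Fintype.card ι) - m -
        awgnCapacity (Fintype.card ι) ((σ : ℝ)⁻¹ ^ 2))) := by
  rw [ENNReal.ofReal_add (by positivity) (Real.exp_pos _).le,
    ← lintegral_exp_dotProduct_sub_dotProduct_self _ _ (π k)]
  calc _ ≤ _ := lintegral_mono fun p => ENNReal.ofReal_add_le
    _ = _ := lintegral_add_right _ (by fun_prop)
    _ ≤ _ := by
      gcongr
      rw [lintegral_indicator_exp_logLikelihoodRatio π hσ g k (measurableSet_lt_dotProduct _ _ _)]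
      exact gaussianPi_lt_dotProduct_le hgk hε

end

variable [Fintype κ] (π : κ → Equiv.Perm ι) {σ : ℝ≥0}

lemma permSurprisal_le [DecidableEq κ] (hσ : σ ≠ 0) (r : ℝ) {m : ℝ} (hm : 0 ≤ m) (g : κ)
    (p : (ι → ℝ) × (ι → ℝ)) :
    permSurprisal π σ g p ≤ (σ : ℝ)⁻¹ * |(p.1 ∘ π g) ⬝ᵥ p.2| + m +
      ∑ k ∈ Finset.univ.erase g, deflatedRatio π σ r m g k p := by
  rw [permSurprisal, ← Finset.add_sum_erase _ _ (Finset.mem_univ g), logLikelihoodRatio_self,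
    Real.exp_zero]
  exact log_one_add_sum_le (a := fun k => Real.exp (logLikelihoodRatio π σ g k p))
    (by positivity) (fun _ => (Real.exp_pos _).le) (exp_logLikelihoodRatio_le π hσ r hm g · p)

lemma lintegral_permSurprisal_le [Nonempty ι] (hσ : σ ≠ 0) {g : κ}
    (hg : ∀ k ≠ g, ∀ i, π k i ≠ π g i) {ε m : ℝ} (hε : 0 < ε) (hm : 0 ≤ m) :
    ∫⁻ p, .ofReal (permSurprisal π σ g p) ∂(gaussianPi ι 1).prod (gaussianPi ι 1) ≤
      .ofReal ((σ : ℝ)⁻¹ * √(Fintype.card ι) + m +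
        Fintype.card κ * (2 / (ε ^ 2 * Fintype.card ι) +
          Real.exp ((σ : ℝ)⁻¹ ^ 2 * (ε * Fintype.card ι) - m -
            awgnCapacity (Fintype.card ι) ((σ : ℝ)⁻¹ ^ 2)))) := by
  classical
  set b := 2 / (ε ^ 2 * Fintype.card ι) + Real.exp ((σ : ℝ)⁻¹ ^ 2 * (ε * Fintype.card ι) - m -
    awgnCapacity (Fintype.card ι) ((σ : ℝ)⁻¹ ^ 2))
  have : 0 ≤ b := by positivity
  set D := fun k p => deflatedRatio π σ (ε * Fintype.card ι) m g k p
  calc ∫⁻ p, .ofReal (permSurprisal π σ g p) ∂(gaussianPi ι 1).prod (gaussianPi ι 1)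
      ≤ ∫⁻ p, (.ofReal (σ : ℝ)⁻¹ * .ofReal |(p.1 ∘ π g) ⬝ᵥ p.2| + .ofReal m +
          ∑ k ∈ Finset.univ.erase g, .ofReal (D k p))
          ∂(gaussianPi ι 1).prod (gaussianPi ι 1) := by
        refine lintegral_mono fun p =>
          (ENNReal.ofReal_le_ofReal (permSurprisal_le π hσ (ε * Fintype.card ι) hm g p)).trans ?_
        rw [← ENNReal.ofReal_mul (by positivity), ← ENNReal.ofReal_add (by positivity) hm,
          ← ENNReal.ofReal_sum_of_nonneg fun k _ => deflatedRatio_nonneg π _ _ _ k p]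
        exact ENNReal.ofReal_add_le
    _ = .ofReal (σ : ℝ)⁻¹ *
          ∫⁻ p, .ofReal |(p.1 ∘ π g) ⬝ᵥ p.2| ∂(gaussianPi ι 1).prod (gaussianPi ι 1) +
        .ofReal m + ∑ k ∈ Finset.univ.erase g, ∫⁻ p, .ofReal (D k p)
          ∂(gaussianPi ι 1).prod (gaussianPi ι 1) := by
        rw [lintegral_add_right _ (by fun_prop), lintegral_add_right _ (by fun_prop),
          lintegral_const_mul _ (by fun_prop), lintegral_finsetSum _ (by fun_prop),
          lintegral_const, measure_univ, mul_one]
    _ ≤ .ofReal (σ : ℝ)⁻¹ * .ofReal √(Fintype.card ι) + .ofReal m +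
          ∑ _k : κ, .ofReal b := by
        gcongr
        · exact lintegral_abs_dotProduct_gaussianPi_prod_le (π g)
        · exact (Finset.sum_le_sum fun k hk => lintegral_deflatedRatio_le π hσ
            (hg k (Finset.ne_of_mem_erase hk)) hε m).trans
            (Finset.sum_le_sum_of_subset (Finset.erase_subset _ _))
    _ = _ := by
        rw [Finset.sum_const, Finset.card_univ, nsmul_eq_mul, ← ENNReal.ofReal_natCast,
          ← ENNReal.ofReal_mul (by positivity), ← ENNReal.ofReal_mul (by positivity),
          ← ENNReal.ofReal_add (by positivity) hm,
          ← ENNReal.ofReal_add (by positivity) (by positivity)]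

lemma integrable_permSurprisal [Nonempty ι] (hσ : σ ≠ 0) {g : κ}
    (hg : ∀ k ≠ g, ∀ i, π k i ≠ π g i) :
    Integrable (permSurprisal π σ g) ((gaussianPi ι 1).prod (gaussianPi ι 1)) := by
  refine ⟨by fun_prop, ?_⟩
  rw [hasFiniteIntegral_iff_ofReal (ae_of_all _ fun p => permSurprisal_nonneg π g p)]
  exact (lintegral_permSurprisal_le π hσ hg one_pos le_rfl).trans_lt ENNReal.ofReal_lt_top

lemma integral_permSurprisal_le [Nonempty ι] (hσ : σ ≠ 0) {g : κ}
    (hg : ∀ k ≠ g, ∀ i, π k i ≠ π g i) {ε : ℝ} (hε : 0 < ε) :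
    ∫ p, permSurprisal π σ g p ∂(gaussianPi ι 1).prod (gaussianPi ι 1) ≤
      surprisalBound (Fintype.card ι) (Fintype.card κ) (σ : ℝ)⁻¹ ε := by
  set n := Fintype.card ι
  set m := max 0 (Real.log (Fintype.card κ) + (σ : ℝ)⁻¹ ^ 2 * (ε * n) -
    awgnCapacity n ((σ : ℝ)⁻¹ ^ 2)) with hm
  have hN : (0 : ℝ) < Fintype.card κ := Nat.cast_pos.2 (Fintype.card_pos_iff.2 ⟨g⟩)
  have hunion : Fintype.card κ * Real.exp ((σ : ℝ)⁻¹ ^ 2 * (ε * n) - m -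
      awgnCapacity n ((σ : ℝ)⁻¹ ^ 2)) ≤ 1 := by
    nth_rw 1 [← Real.exp_log hN]
    rw [← Real.exp_add, Real.exp_le_one_iff]
    linarith [le_max_right 0 (Real.log (Fintype.card κ) + (σ : ℝ)⁻¹ ^ 2 * (ε * n) -
      awgnCapacity n ((σ : ℝ)⁻¹ ^ 2))]
  have hint := lintegral_permSurprisal_le π hσ hg hε (le_max_left 0 _ : 0 ≤ m)
  rw [← ofReal_integral_eq_lintegral_ofReal (integrable_permSurprisal π hσ hg)
    (ae_of_all _ fun p => permSurprisal_nonneg π g p),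
    ENNReal.ofReal_le_ofReal_iff (by positivity)] at hint
  rw [surprisalBound, ← hm]
  linarith

lemma awgnCapacity_sub_log_le_mutualInfo [Nonempty ι] [Nonempty κ] (hσ : σ ≠ 0)
    (hπ : Pairwise fun g k => ∀ i, π g i ≠ π k i) :
    awgnCapacity (Fintype.card ι) ((σ : ℝ) ^ 2)⁻¹ - Real.log (Fintype.card κ) ≤
      mutualInfo (permutedLaw π σ) := by
  rw [mutualInfo_permutedLaw π hσ fun g => integrable_permSurprisal π hσ fun k hk => hπ hk]
  exact le_add_of_nonneg_right (mul_nonneg (by positivity)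
    (Finset.sum_nonneg fun g _ => integral_nonneg fun p => permSurprisal_nonneg π g p))

lemma mutualInfo_le_awgnCapacity_sub_log_add [Nonempty ι] [Nonempty κ] (hσ : σ ≠ 0)
    (hπ : Pairwise fun g k => ∀ i, π g i ≠ π k i) {ε : ℝ} (hε : 0 < ε) :
    mutualInfo (permutedLaw π σ) ≤
      awgnCapacity (Fintype.card ι) ((σ : ℝ) ^ 2)⁻¹ - Real.log (Fintype.card κ) +
        surprisalBound (Fintype.card ι) (Fintype.card κ) (σ : ℝ)⁻¹ ε := by
  have hdisj (g k : κ) (hk : k ≠ g) : ∀ i, π k i ≠ π g i := hπ hk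
  rw [mutualInfo_permutedLaw π hσ fun g => integrable_permSurprisal π hσ (hdisj g)]
  gcongr
  rw [inv_mul_le_iff₀ (by positivity), ← nsmul_eq_mul]
  exact Finset.sum_le_card_nsmul _ _ _ fun g _ => integral_permSurprisal_le π hσ (hdisj g) hε

end EntropyBound

section HighSNR

lemma tendsto_log_natCast_atTop : Tendsto (fun n : ℕ => Real.log n) atTop atTop :=
  Real.tendsto_log_atTop.comp tendsto_natCast_atTop_atTop

lemma eventually_log_natCast_pos : ∀ᶠ n : ℕ in atTop, 0 < Real.log n :=
  tendsto_log_natCast_atTop.eventually_gt_atTop 0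

lemma tendsto_natCast_div_log_atTop : Tendsto (fun n : ℕ => n / Real.log n) atTop atTop := by
  have hzero : Tendsto (fun n : ℕ => Real.log n / n) atTop (𝓝 0) :=
    Real.isLittleO_log_id_atTop.tendsto_div_nhds_zero.comp tendsto_natCast_atTop_atTop
  have hpos : ∀ᶠ n : ℕ in atTop, Real.log n / n ∈ Set.Ioi 0 := by
    filter_upwards [eventually_log_natCast_pos, eventually_gt_atTop 0] with n hlog hn
    exact div_pos hlog (Nat.cast_pos.2 hn)
  exact (tendsto_nhdsWithin_iff.2 ⟨hzero, hpos⟩).inv_tendsto_nhdsGT_zero.congr fun n => inv_div _ _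

lemma tendsto_awgnCapacity_div_log (α : ℝ) :
    Tendsto (fun n : ℕ => awgnCapacity n (α * Real.log n / n) / Real.log n) atTop (𝓝 (α / 2)) := by
  have hlog := (Real.tendsto_mul_log_one_add_div_atTop α).comp tendsto_natCast_div_log_atTop
  refine (hlog.div_const 2).congr fun n => ?_
  rw [Function.comp_apply, div_div_eq_mul_div, awgnCapacity]
  ring

lemma surprisalBound_div_log {α : ℝ} (hα : 0 ≤ α) {n : ℕ} (hn : 1 < n) :
    surprisalBound n n √(α * Real.log n / n) (√√(Real.log n))⁻¹ / Real.log n =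
      (√α + 2) * (√(Real.log n))⁻¹ +
        max 0 (1 + α * (√√(Real.log n))⁻¹ - awgnCapacity n (α * Real.log n / n) / Real.log n) +
        (Real.log n)⁻¹ := by
  have hn0 : (0 : ℝ) < n := by positivity
  have hlog : 0 < Real.log n := Real.log_pos (Nat.one_lt_cast.2 hn)
  have hsqrt : √(Real.log n) / Real.log n = (√(Real.log n))⁻¹ :=
    Real.sqrt_div_self'.trans (one_div _)
  have hfluct : √(α * Real.log n / n) * √n = √α * √(Real.log n) := by
    rw [← Real.sqrt_mul (by positivity), div_mul_cancel₀ _ hn0.ne', Real.sqrt_mul hα]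
  have hcheb : n * (2 / ((√√(Real.log n))⁻¹ ^ 2 * n)) = 2 * √(Real.log n) := by
    rw [inv_pow, Real.sq_sqrt (Real.sqrt_nonneg _)]
    field_simp
  have hunion : max 0 (Real.log n + α * Real.log n / n * ((√√(Real.log n))⁻¹ * n) -
      awgnCapacity n (α * Real.log n / n)) / Real.log n =
        max 0 (1 + α * (√√(Real.log n))⁻¹ -
          awgnCapacity n (α * Real.log n / n) / Real.log n) := by
    rw [← max_div_div_right hlog.le, zero_div]
    field_simp
  rw [surprisalBound, hfluct, hcheb, Real.sq_sqrt (by positivity), add_div, add_div, add_div,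
    hunion, mul_div_assoc √α, mul_div_assoc 2, hsqrt, one_div]
  ring

lemma tendsto_surprisalBound_div_log {α : ℝ} (hα : 0 ≤ α) :
    Tendsto (fun n : ℕ => surprisalBound n n √(α * Real.log n / n) (√√(Real.log n))⁻¹ /
      Real.log n) atTop (𝓝 (max 0 (1 - α / 2))) := by
  have hsqrt : Tendsto (fun n : ℕ => √(Real.log n)) atTop atTop :=
    Real.tendsto_sqrt_atTop.comp tendsto_log_natCast_atTop
  have hε : Tendsto (fun n : ℕ => (√√(Real.log n))⁻¹) atTop (𝓝 0) :=
    (Real.tendsto_sqrt_atTop.comp hsqrt).inv_tendsto_atTop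
  have hmax := (((hε.const_mul α).const_add 1).sub
    (tendsto_awgnCapacity_div_log α)).max (tendsto_const_nhds (x := (0 : ℝ)))
  have hlim := ((hsqrt.inv_tendsto_atTop.const_mul (√α + 2)).add hmax).add
    tendsto_log_natCast_atTop.inv_tendsto_atTop
  simp only [mul_zero, add_zero, zero_add, max_comm _ (0 : ℝ)] at hlim
  refine hlim.congr' ?_
  filter_upwards [eventually_gt_atTop 1] with n hn
  exact (surprisalBound_div_log hα hn).symm

lemma inv_sigmaAlpha (L : ℕ) (α : ℝ) : (sigmaAlpha L α)⁻¹ = √(α * Real.log L / L) := by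
  rw [sigmaAlpha, ← Real.sqrt_inv, inv_div]

lemma awgnCapacity_sub_mutualInfo_bounds {ι : Type*} [Fintype ι] [Nontrivial ι]
    {π : ι → Equiv.Perm ι} (hπ : Pairwise fun g k => ∀ i, π g i ≠ π k i) {α ε : ℝ} (hα : 0 < α)
    (hε : 0 < ε) :
    letI n := Fintype.card ι
    letI gap := awgnCapacity n (α * Real.log n / n) - mutualInfo (permutedLaw π (sigmaAlpha n α))
    Real.log n - surprisalBound n n √(α * Real.log n / n) ε ≤ gap ∧
      gap ≤ min (Real.log n) (awgnCapacity n (α * Real.log n / n)) := by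
  have hlog : 0 < Real.log (Fintype.card ι) :=
    Real.log_pos (Nat.one_lt_cast.2 Fintype.one_lt_card)
  have hσ : 0 < sigmaAlpha (Fintype.card ι) α := Real.sqrt_pos.2 (by positivity)
  have hinv := inv_sigmaAlpha (Fintype.card ι) α
  have hcap : (sigmaAlpha (Fintype.card ι) α ^ 2)⁻¹ =
      α * Real.log (Fintype.card ι) / Fintype.card ι := by
    rw [← inv_pow, hinv, Real.sq_sqrt (by positivity)]
  lift sigmaAlpha (Fintype.card ι) α to ℝ≥0 using hσ.le with σ
  have hσ0 : σ ≠ 0 := (NNReal.coe_pos.1 hσ).ne'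
  have hlower := awgnCapacity_sub_log_le_mutualInfo π hσ0 hπ
  have hupper := mutualInfo_le_awgnCapacity_sub_log_add π hσ0 hπ hε
  have hnonneg := mutualInfo_permutedLaw_nonneg π hσ0
  rw [hcap] at hlower hupper
  rw [hinv] at hupper
  exact ⟨by linarith, le_min (by linarith) (by linarith)⟩

lemma tendsto_awgnCapacity_sub_mutualInfo_div_log {β : Type*} {l : Filter β} {ι : β → Type*}
    [∀ b, Fintype (ι b)] {π : ∀ b, ι b → Equiv.Perm (ι b)}
    (hπ : ∀ b, Pairwise fun g k => ∀ i, π b g i ≠ π b k i)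
    (hcard : Tendsto (fun b => Fintype.card (ι b)) l atTop) {α : ℝ} (hα : 0 < α) :
    Tendsto (fun b => (awgnCapacity (Fintype.card (ι b))
        (α * Real.log (Fintype.card (ι b)) / Fintype.card (ι b)) -
      mutualInfo (permutedLaw (π b) (sigmaAlpha (Fintype.card (ι b)) α))) /
        Real.log (Fintype.card (ι b))) l (𝓝 (min 1 (α / 2))) := by
  have hlower := ((tendsto_surprisalBound_div_log hα.le).comp hcard).const_sub 1
  have hupper := (tendsto_const_nhds (x := (1 : ℝ))).min
    ((tendsto_awgnCapacity_div_log α).comp hcard)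
  rw [← min_sub_sub_left, sub_zero, sub_sub_cancel] at hlower
  have hnontrivial : ∀ᶠ b in l, Nontrivial (ι b) :=
    (hcard.eventually_gt_atTop 1).mono fun b => Fintype.one_lt_card_iff_nontrivial.1
  refine tendsto_of_tendsto_of_tendsto_of_le_of_le' hlower hupper ?_ ?_ <;>
    filter_upwards [hnontrivial] with b _
  all_goals
    have hlog : 0 < Real.log (Fintype.card (ι b)) :=
      Real.log_pos (Nat.one_lt_cast.2 Fintype.one_lt_card)
    have ⟨hge, hle⟩ := awgnCapacity_sub_mutualInfo_bounds (hπ b) hα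
      (inv_pos.2 (Real.sqrt_pos.2 (Real.sqrt_pos.2 hlog)))
  · rw [Function.comp_apply, one_sub_div hlog.ne']
    gcongr
  · rw [Function.comp_apply, ← div_self hlog.ne', min_div_div_right hlog.le]
    gcongr

lemma tendsto_mutualInfo_div_log {β : Type*} {l : Filter β} {ι : β → Type*}
    [∀ b, Fintype (ι b)] {π : ∀ b, ι b → Equiv.Perm (ι b)}
    (hπ : ∀ b, Pairwise fun g k => ∀ i, π b g i ≠ π b k i)
    (hcard : Tendsto (fun b => Fintype.card (ι b)) l atTop) {α : ℝ} (hα : 0 < α) :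
    Tendsto (fun b => mutualInfo (permutedLaw (π b) (sigmaAlpha (Fintype.card (ι b)) α)) /
      Real.log (Fintype.card (ι b))) l (𝓝 (max (α / 2 - 1) 0)) := by
  have hlim := ((tendsto_awgnCapacity_div_log α).comp hcard).sub
    (tendsto_awgnCapacity_sub_mutualInfo_div_log hπ hcard hα)
  rw [← max_sub_sub_left, sub_self] at hlim
  refine hlim.congr fun b => ?_
  rw [Function.comp_apply, ← sub_div, sub_sub_cancel]

end HighSNR

section MultiReferenceAlignment

lemma mraJoint1_eq_permutedLaw (L : ℕ) [NeZero L] (σ : ℝ) :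
    mraJoint1 L σ = permutedLaw (fun ℓ : Fin L => Equiv.addRight ℓ) σ := by
  rw [permutedLaw, Fintype.card_fin]
  exact map_prod_smul_count_prod (L : ℝ≥0∞)⁻¹ (gaussianPi (Fin L) 1) (gaussianPi (Fin L) 1)
    (f := fun ℓ p => (p.1, p.1 ∘ Equiv.addRight ℓ + σ • p.2)) (by fun_prop)

lemma pairwise_addRight_apply_ne {G : Type*} [AddGroup G] :
    Pairwise fun g k : G => ∀ i, Equiv.addRight g i ≠ Equiv.addRight k i :=
  fun _ _ hne _ heq => hne (add_left_cancel heq)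

theorem mutual_info_high_snr_general {α : ℝ} (hα : 0 < α) :
    Tendsto (fun L : ℕ => (awgnCapacity L (α * Real.log L / L) -
        mutualInfo (mraJoint1 L (sigmaAlpha L α))) / Real.log L) atTop (𝓝 (min 1 (α / 2))) ∧
      Tendsto (fun L : ℕ => mutualInfo (mraJoint1 L (sigmaAlpha L α)) / Real.log L)
        atTop (𝓝 (max (α / 2 - 1) 0)) := by
  have hπ (n : ℕ) := pairwise_addRight_apply_ne (G := Fin (n + 1))
  have hcard : Tendsto (fun n => Fintype.card (Fin (n + 1))) atTop atTop := by
    simpa only [Fintype.card_fin] using tendsto_add_atTop_nat 1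
  have hgap := tendsto_awgnCapacity_sub_mutualInfo_div_log hπ hcard hα
  have hinfo := tendsto_mutualInfo_div_log hπ hcard hα
  simp only [Fintype.card_fin, ← mraJoint1_eq_permutedLaw] at hgap hinfo
  exact ⟨(tendsto_add_atTop_iff_nat 1).1 hgap, (tendsto_add_atTop_iff_nat 1).1 hinfo⟩

end MultiReferenceAlignment
end

/-- mutual information at high SNR. With `σ² = L/(α log L)` and `α > 2`
fixed, `I(X;Y) = (L/2)·log(1 + σ⁻²) − (1 + o(1))·log L`; equivalently
`I(X;Y)/log L → α/2 − 1`. (Here `σ⁻² = α log L / L`.) -/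
theorem mutual_info_high_snr (α : ℝ) (hα : 2 < α) :
    Tendsto (fun L : ℕ =>
        ((L : ℝ) / 2 * Real.log (1 + α * Real.log L / L) -
          mutualInfo (mraJoint1 L (sigmaAlpha L α))) / Real.log L)
      atTop (nhds 1) ∧
    Tendsto (fun L : ℕ => mutualInfo (mraJoint1 L (sigmaAlpha L α)) / Real.log L)
      atTop (nhds (α / 2 - 1)) := by
  have hgen := mutual_info_high_snr_general (by linarith : 0 < α)
  rwa [min_eq_left (by linarith), max_eq_left (by linarith)] at hgen

end MRAformal
end

section
/- Autocorrelation concentration for a Gaussian signal: there is a universal constant c > 0 such that for every L ≥ 1, every κ > 0, and X ~ N(0, I_L), the probability that either |L^{−1}‖X‖² − 1| ≥ κ or max_{ℓ ∈ {1,…,L−1}} L^{−1}|⟨X, R_ℓ X⟩| > κ is at most 2L·exp(−c·L·min(κ, κ²)). -/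
open MeasureTheory ProbabilityTheory Filter
open scoped ENNReal

namespace MRAformal

/-!
Both events are deviations of a quadratic form `⟪X, U X⟫` from its mean `trace U`, where `U` is a
cyclic shift: the shift by `0` has trace `L` and gives the norm, the other shifts have no fixed
point, hence trace `0`. Replacing an operator `T` by its self-adjoint part changes neither the form
nor the trace, and increases neither the operator norm nor the Hilbert–Schmidt norm. In an
orthonormal eigenbasis the coordinates of `X` are again i.i.d. standard Gaussian, so the centred
form is `∑ i, w i * (Y i ^ 2 - 1)`, a weighted sum of independent centred chi-squares. Its moment
generating function is explicit, and Chernoff's bound gives a Bernstein tail with variance proxy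
`‖T‖²_HS` (equal to `L` for a shift) and scale `‖T‖` (equal to `1`). A union bound over the `L`
shifts concludes.
-/

open Module
open scoped InnerProduct RealInnerProductSpace

section Subexponential

variable {Ω : Type*} {mΩ : MeasurableSpace Ω} {μ : Measure Ω} {X : Ω → ℝ} {v v' b b' : ℝ}

/-- Sub-exponential random variables: the moment generating function of `X` is at most
`t ↦ exp (v * t ^ 2)` on `[-b, b]`. In contrast to `ProbabilityTheory.HasSubgaussianMGF`, nothing is
required for large `|t|`, and the exponent carries no factor `1 / 2`. -/
structure HasSubexponentialMGF (X : Ω → ℝ) (v b : ℝ) (μ : Measure Ω) : Prop where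
  integrable_exp_mul : ∀ t : ℝ, |t| ≤ b → Integrable (fun ω ↦ Real.exp (t * X ω)) μ
  mgf_le : ∀ t : ℝ, |t| ≤ b → mgf X μ t ≤ Real.exp (v * t ^ 2)

namespace HasSubexponentialMGF

lemma map_iff {Ω' : Type*} {mΩ' : MeasurableSpace Ω'} {μ : Measure Ω'} {Y : Ω' → Ω}
    (hX : AEMeasurable X (μ.map Y)) (hY : AEMeasurable Y μ) :
    HasSubexponentialMGF X v b (μ.map Y) ↔ HasSubexponentialMGF (X ∘ Y) v b μ := by
  have h_exp (t : ℝ) : AEStronglyMeasurable (fun ω ↦ Real.exp (t * X ω)) (μ.map Y) := by fun_prop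
  have h_integrable (t : ℝ) : Integrable (fun ω ↦ Real.exp (t * X ω)) (μ.map Y) ↔
      Integrable (fun ω ↦ Real.exp (t * (X ∘ Y) ω)) μ :=
    integrable_map_measure (h_exp t) hY
  have h_mgf (t : ℝ) : mgf X (μ.map Y) t = mgf (X ∘ Y) μ t := mgf_map hY (h_exp t)
  exact ⟨fun h ↦ ⟨fun t ht ↦ (h_integrable t).1 (h.1 t ht), fun t ht ↦ h_mgf t ▸ h.2 t ht⟩,
    fun h ↦ ⟨fun t ht ↦ (h_integrable t).2 (h.1 t ht), fun t ht ↦ h_mgf t ▸ h.2 t ht⟩⟩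

lemma mono (h : HasSubexponentialMGF X v b μ) (hv : v ≤ v') : HasSubexponentialMGF X v' b μ where
  integrable_exp_mul := h.integrable_exp_mul
  mgf_le t ht := (h.mgf_le t ht).trans (by gcongr)

protected lemma const_mul (h : HasSubexponentialMGF X v b μ) {r : ℝ} (hr : |r| * b' ≤ b) :
    HasSubexponentialMGF (fun ω ↦ r * X ω) (r ^ 2 * v) b' μ := by
  have hrt {t : ℝ} (ht : |t| ≤ b') : |r * t| ≤ b := by
    rw [abs_mul]
    exact (mul_le_mul_of_nonneg_left ht (abs_nonneg r)).trans hr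
  refine ⟨fun t ht ↦ ?_, fun t ht ↦ ?_⟩
  · simpa only [mul_left_comm t r, mul_assoc] using h.integrable_exp_mul (r * t) (hrt ht)
  · rw [mgf_const_mul]
    exact (h.mgf_le (r * t) (hrt ht)).trans_eq (by ring_nf)

lemma neg (h : HasSubexponentialMGF X v b μ) : HasSubexponentialMGF (fun ω ↦ -X ω) v b μ := by
  simpa using h.const_mul (r := -1) (b' := b) (by simp)

lemma sum_of_iIndepFun {ι : Type*} {X : ι → Ω → ℝ} {v : ι → ℝ} {s : Finset ι}
    (h_indep : iIndepFun X μ) (h_meas : ∀ i, Measurable (X i))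
    (h : ∀ i ∈ s, HasSubexponentialMGF (X i) (v i) b μ) :
    HasSubexponentialMGF (fun ω ↦ ∑ i ∈ s, X i ω) (∑ i ∈ s, v i) b μ := by
  have := h_indep.isProbabilityMeasure
  simp only [← Finset.sum_apply]
  refine ⟨fun t ht ↦ h_indep.integrable_exp_mul_sum h_meas fun i hi ↦
    (h i hi).integrable_exp_mul t ht, fun t ht ↦ ?_⟩
  rw [h_indep.mgf_sum h_meas, Finset.sum_mul, Real.exp_sum]
  exact Finset.prod_le_prod (fun _ _ ↦ mgf_nonneg) fun i hi ↦ (h i hi).mgf_le t ht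

variable [IsFiniteMeasure μ] {ε : ℝ}

lemma measure_ge_le (h : HasSubexponentialMGF X v b μ) (hv : 0 ≤ v) (hb : 0 ≤ b) (hε : 0 ≤ ε) :
    μ.real {ω | ε ≤ X ω} ≤ Real.exp (-min (ε ^ 2 / (4 * v)) (b * ε / 2)) := by
  -- The exponent `v * t ^ 2 - t * ε` is minimised at `ε / (2 * v)`, which may exceed `b`.
  set t := min (ε / (2 * v)) b with ht
  have ht0 : 0 ≤ t := by positivity
  have htb : |t| ≤ b := (abs_of_nonneg ht0).trans_le (min_le_right _ _)
  calc μ.real {ω | ε ≤ X ω}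
    _ ≤ Real.exp (-t * ε) * mgf X μ t :=
      measure_ge_le_exp_mul_mgf ε ht0 (h.integrable_exp_mul t htb)
    _ ≤ Real.exp (-t * ε) * Real.exp (v * t ^ 2) := by gcongr; exact h.mgf_le t htb
    _ = Real.exp (v * t ^ 2 - t * ε) := by rw [← Real.exp_add]; ring_nf
    _ ≤ Real.exp (-min (ε ^ 2 / (4 * v)) (b * ε / 2)) := Real.exp_le_exp.2 ?_
  have hvt : v * t ≤ ε / 2 :=
    calc v * t ≤ v * (ε / (2 * v)) := by gcongr; exact min_le_left _ _
      _ = ε / 2 * (v / v) := by ring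
      _ ≤ ε / 2 := mul_le_of_le_one_right (by positivity) (div_self_le_one v)
  have htε : t * (ε / 2) = min (ε ^ 2 / (4 * v)) (b * ε / 2) := by
    rw [ht, min_mul_of_nonneg _ _ (by positivity)]
    ring_nf
  rw [← htε]
  nlinarith

lemma measure_abs_ge_le (h : HasSubexponentialMGF X v b μ) (hv : 0 ≤ v) (hb : 0 ≤ b) (hε : 0 ≤ ε) :
    μ.real {ω | ε ≤ |X ω|} ≤ 2 * Real.exp (-min (ε ^ 2 / (4 * v)) (b * ε / 2)) := by
  have h_union : {ω | ε ≤ |X ω|} = {ω | ε ≤ X ω} ∪ {ω | ε ≤ -X ω} := by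
    ext ω
    simp [le_abs]
  rw [h_union, two_mul]
  exact (measureReal_union_le _ _).trans
    (add_le_add (h.measure_ge_le hv hb hε) (h.neg.measure_ge_le hv hb hε))

end HasSubexponentialMGF

end Subexponential

section ChiSquared

lemma gaussianPDFReal_mul_exp_mul_sq (t y : ℝ) :
    gaussianPDFReal 0 1 y * Real.exp (t * y ^ 2)
      = (√(2 * Real.pi))⁻¹ * Real.exp (-(1 / 2 - t) * y ^ 2) := by
  rw [gaussianPDFReal, mul_assoc, ← Real.exp_add]
  simp only [NNReal.coe_one, mul_one, sub_zero]
  ring_nf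

lemma integrable_exp_mul_sq_gaussianReal {t : ℝ} (ht : t < 1 / 2) :
    Integrable (fun y ↦ Real.exp (t * y ^ 2)) (gaussianReal 0 1) := by
  rw [gaussianReal_of_var_ne_zero _ one_ne_zero, integrable_withDensity_iff_integrable_smul'
    (measurable_gaussianPDF _ _) (ae_of_all _ fun _ ↦ ENNReal.ofReal_lt_top)]
  simp only [toReal_gaussianPDF, smul_eq_mul, gaussianPDFReal_mul_exp_mul_sq]
  exact (integrable_exp_neg_mul_sq (by linarith)).const_mul _

lemma integral_exp_mul_sq_gaussianReal {t : ℝ} (ht : t < 1 / 2) :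
    ∫ y, Real.exp (t * y ^ 2) ∂gaussianReal 0 1 = (√(1 - 2 * t))⁻¹ := by
  have h2t : 0 < 1 - 2 * t := by linarith
  simp only [integral_gaussianReal_eq_integral_smul one_ne_zero, smul_eq_mul,
    gaussianPDFReal_mul_exp_mul_sq, integral_const_mul, integral_gaussian]
  rw [← Real.sqrt_inv, ← Real.sqrt_mul (by positivity), ← Real.sqrt_inv]
  congr 1
  have : 1 / 2 - t ≠ 0 := by linarith
  field_simp

lemma inv_sqrt_one_sub_le_exp {t : ℝ} (ht : t < 1 / 2) :
    (√(1 - 2 * t))⁻¹ ≤ Real.exp (t / (1 - 2 * t)) := by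
  have h2t : 0 < 1 - 2 * t := by linarith
  rw [← Real.sqrt_inv, Real.sqrt_le_left (by positivity), ← Real.exp_nat_mul]
  calc (1 - 2 * t)⁻¹ = (2 : ℕ) * (t / (1 - 2 * t)) + 1 := by push_cast; field_simp; ring
    _ ≤ _ := Real.add_one_le_exp _

lemma hasSubexponentialMGF_sq_sub_one_gaussianReal :
    HasSubexponentialMGF (fun y ↦ y ^ 2 - 1) 4 (1 / 4) (gaussianReal 0 1) := by
  have h_exp (t y : ℝ) : Real.exp (t * (y ^ 2 - 1)) = Real.exp (-t) * Real.exp (t * y ^ 2) := by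
    rw [← Real.exp_add]
    ring_nf
  refine ⟨fun t ht ↦ ?_, fun t ht ↦ ?_⟩ <;> have ht' : t ≤ 1 / 4 := (le_abs_self t).trans ht
  · simp only [h_exp]
    exact (integrable_exp_mul_sq_gaussianReal (by linarith)).const_mul _
  calc mgf (fun y ↦ y ^ 2 - 1) (gaussianReal 0 1) t
    _ = Real.exp (-t) * (√(1 - 2 * t))⁻¹ := by
      simp only [mgf, h_exp, integral_const_mul]
      rw [integral_exp_mul_sq_gaussianReal (by linarith)]
    _ ≤ Real.exp (-t) * Real.exp (t / (1 - 2 * t)) := by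
      gcongr
      exact inv_sqrt_one_sub_le_exp (by linarith)
    _ = Real.exp (2 * t ^ 2 / (1 - 2 * t)) := by
      have h2t : 1 - 2 * t ≠ 0 := by linarith
      rw [← Real.exp_add]
      congr 1
      rw [eq_div_iff h2t, add_mul, div_mul_cancel₀ t h2t]
      ring
    _ ≤ Real.exp (4 * t ^ 2) := by
      gcongr
      rw [div_le_iff₀ (by linarith)]
      nlinarith [sq_nonneg t]

variable {ι : Type*} [Fintype ι] {b : ℝ}

lemma hasSubexponentialMGF_sum_mul_sq_sub_one {w : ι → ℝ} (hw : ∀ i, |w i| * b ≤ 1 / 4) :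
    HasSubexponentialMGF (fun x : ι → ℝ ↦ ∑ i, w i * (x i ^ 2 - 1)) (4 * ∑ i, w i ^ 2) b
      (Measure.pi fun _ ↦ gaussianReal 0 1) := by
  have h_indep : iIndepFun (fun i (x : ι → ℝ) ↦ w i * (x i ^ 2 - 1))
      (Measure.pi fun _ ↦ gaussianReal 0 1) :=
    iIndepFun_pi (X := fun i y ↦ w i * (y ^ 2 - 1)) fun i ↦ by fun_prop
  simp only [mul_comm (4 : ℝ), Finset.sum_mul]
  refine .sum_of_iIndepFun h_indep (fun i ↦ by fun_prop) fun i _ ↦ ?_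
  have h_eval := hasSubexponentialMGF_sq_sub_one_gaussianReal.const_mul (hw i)
  rw [← (measurePreserving_eval (fun _ : ι ↦ gaussianReal 0 1) i).map_eq] at h_eval
  exact (HasSubexponentialMGF.map_iff (X := fun y ↦ w i * (y ^ 2 - 1)) (by fun_prop)
    (measurable_pi_apply i).aemeasurable).1 h_eval

end ChiSquared

section HilbertSchmidt

variable {E : Type*} [NormedAddCommGroup E] [InnerProductSpace ℝ E] [FiniteDimensional ℝ E]

lemma trace_adjoint_mul_self {ι : Type*} [Fintype ι] (T : E →L[ℝ] E) (e : OrthonormalBasis ι ℝ E) :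
    LinearMap.trace ℝ E (T† * T : E →L[ℝ] E) = ∑ i, ‖T (e i)‖ ^ 2 := by
  simp [LinearMap.trace_eq_sum_inner _ e, ContinuousLinearMap.adjoint_inner_right]

lemma inner_selfAdjointPart_apply (T : E →L[ℝ] E) (x : E) :
    ⟪x, (selfAdjointPart ℝ T : E →L[ℝ] E) x⟫ = ⟪x, T x⟫ := by
  have h_adjoint : ⟪x, (T†) x⟫ = ⟪x, T x⟫ := by
    rw [ContinuousLinearMap.adjoint_inner_right, real_inner_comm]
  rw [selfAdjointPart_apply_coe, ContinuousLinearMap.star_eq_adjoint,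
    smul_apply, add_apply, inner_smul_right,
    inner_add_right, h_adjoint, ← two_mul, invOf_mul_cancel_left]

lemma trace_selfAdjointPart (T : E →L[ℝ] E) :
    LinearMap.trace ℝ E (selfAdjointPart ℝ T : E →L[ℝ] E) = LinearMap.trace ℝ E T := by
  simp only [LinearMap.trace_eq_sum_inner _ (stdOrthonormalBasis ℝ E),
    ContinuousLinearMap.coe_coe, inner_selfAdjointPart_apply]

lemma trace_adjoint_mul_self_selfAdjointPart_le (T : E →L[ℝ] E) :
    LinearMap.trace ℝ E ((selfAdjointPart ℝ T : E →L[ℝ] E)† * selfAdjointPart ℝ T : E →L[ℝ] E)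
      ≤ LinearMap.trace ℝ E (T† * T : E →L[ℝ] E) := by
  set e := stdOrthonormalBasis ℝ E
  have h_adjoint : ∑ i, ‖(T†) (e i)‖ ^ 2 = ∑ i, ‖T (e i)‖ ^ 2 := by
    rw [← trace_adjoint_mul_self, ← trace_adjoint_mul_self, ContinuousLinearMap.adjoint_adjoint]
    exact LinearMap.trace_mul_comm ℝ (T : E →ₗ[ℝ] E) (T† : E →L[ℝ] E)
  have h_norm (x : E) : ‖(selfAdjointPart ℝ T : E →L[ℝ] E) x‖ ^ 2
      ≤ (‖T x‖ ^ 2 + ‖(T†) x‖ ^ 2) / 2 := by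
    have h_apply : (selfAdjointPart ℝ T : E →L[ℝ] E) x = (2⁻¹ : ℝ) • (T x + (T†) x) := by
      simp [ContinuousLinearMap.star_eq_adjoint]
    have h_parallelogram := parallelogram_law_with_norm ℝ (T x) ((T†) x)
    rw [h_apply, norm_smul, mul_pow, Real.norm_eq_abs, sq_abs]
    linarith [mul_self_nonneg ‖T x - (T†) x‖]
  rw [trace_adjoint_mul_self _ e, trace_adjoint_mul_self _ e]
  calc ∑ i, ‖(selfAdjointPart ℝ T : E →L[ℝ] E) (e i)‖ ^ 2
    _ ≤ ∑ i, (‖T (e i)‖ ^ 2 + ‖(T†) (e i)‖ ^ 2) / 2 := Finset.sum_le_sum fun i _ ↦ h_norm (e i)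
    _ = ∑ i, ‖T (e i)‖ ^ 2 := by
      rw [← Finset.sum_div, Finset.sum_add_distrib, h_adjoint, add_self_div_two]

end HilbertSchmidt

lemma norm_selfAdjointPart_le {A : Type*} [SeminormedAddCommGroup A] [NormedSpace ℝ A]
    [StarAddMonoid A] [NormedStarGroup A] [StarModule ℝ A] (a : A) :
    ‖(selfAdjointPart ℝ a : A)‖ ≤ ‖a‖ := by
  rw [selfAdjointPart_apply_coe, norm_smul, invOf_eq_inv, Real.norm_eq_abs, abs_of_pos (by simp)]
  have := norm_add_le a (star a)
  rw [norm_star] at this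
  linarith

section HansonWright

variable {E : Type*} [NormedAddCommGroup E] [InnerProductSpace ℝ E] [FiniteDimensional ℝ E]
  [MeasurableSpace E] [BorelSpace E] {T : E →L[ℝ] E} {b : ℝ}

lemma hasSubexponentialMGF_inner_sub_trace_of_isSymmetric (hT : (T : E →ₗ[ℝ] E).IsSymmetric)
    (hb : 0 ≤ b) (hTb : ‖T‖ * b ≤ 1 / 4) :
    HasSubexponentialMGF (fun x ↦ ⟪x, T x⟫ - LinearMap.trace ℝ E T)
      (4 * LinearMap.trace ℝ E (T† * T : E →L[ℝ] E)) b (ProbabilityTheory.stdGaussian E) := by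
  set e := hT.eigenvectorBasis rfl
  set w := hT.eigenvalues rfl
  have hTe (i) : T (e i) = w i • e i := hT.apply_eigenvectorBasis rfl i
  have hw (i) : ‖T (e i)‖ = |w i| := by simp [hTe, norm_smul]
  have h_inner (y : Fin (finrank ℝ E) → ℝ) :
      ⟪∑ i, y i • e i, T (∑ i, y i • e i)⟫ = ∑ i, w i * y i ^ 2 := by
    simp only [map_sum, map_smul, hTe, smul_smul, e.orthonormal.inner_sum, conj_trivial]
    exact Finset.sum_congr rfl fun i _ ↦ by ring
  have h_trace : LinearMap.trace ℝ E T = ∑ i, w i := hT.trace_eq_sum_eigenvalues rfl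
  have h_frobenius : LinearMap.trace ℝ E (T† * T : E →L[ℝ] E) = ∑ i, w i ^ 2 := by
    simp only [trace_adjoint_mul_self T e, hw, sq_abs]
  have hwb (i) : |w i| * b ≤ 1 / 4 := by
    have := T.le_opNorm (e i)
    rw [hw, e.norm_eq_one, mul_one] at this
    exact (mul_le_mul_of_nonneg_right this hb).trans hTb
  rw [stdGaussian_eq_map_pi_orthonormalBasis e, h_frobenius,
    HasSubexponentialMGF.map_iff (by fun_prop) (by fun_prop : Measurable _).aemeasurable]
  convert hasSubexponentialMGF_sum_mul_sq_sub_one hwb using 2 with y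
  simp only [Function.comp_apply, h_inner, h_trace, mul_sub, mul_one, Finset.sum_sub_distrib]

/-- **Hanson–Wright inequality** for Gaussian vectors, in terms of the moment generating function.
The trace of `T† * T` is the squared Hilbert–Schmidt norm of `T`. -/
theorem hasSubexponentialMGF_inner_sub_trace (T : E →L[ℝ] E) (hb : 0 ≤ b)
    (hTb : ‖T‖ * b ≤ 1 / 4) :
    HasSubexponentialMGF (fun x ↦ ⟪x, T x⟫ - LinearMap.trace ℝ E T)
      (4 * LinearMap.trace ℝ E (T† * T : E →L[ℝ] E)) b (ProbabilityTheory.stdGaussian E) := by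
  have h_symm : ((selfAdjointPart ℝ T : E →L[ℝ] E) : E →ₗ[ℝ] E).IsSymmetric :=
    ContinuousLinearMap.isSelfAdjoint_iff_isSymmetric.1 (selfAdjointPart ℝ T).2
  have h_norm : ‖(selfAdjointPart ℝ T : E →L[ℝ] E)‖ * b ≤ 1 / 4 :=
    (mul_le_mul_of_nonneg_right (norm_selfAdjointPart_le T) hb).trans hTb
  have h := hasSubexponentialMGF_inner_sub_trace_of_isSymmetric h_symm hb h_norm
  simp only [inner_selfAdjointPart_apply, trace_selfAdjointPart] at h
  exact h.mono (by gcongr; exact trace_adjoint_mul_self_selfAdjointPart_le T)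

lemma hasSubexponentialMGF_inner_linearIsometry_sub_trace (U : E →ₗᵢ[ℝ] E) :
    HasSubexponentialMGF (fun x ↦ ⟪x, U x⟫ - LinearMap.trace ℝ E U.toLinearMap)
      (4 * finrank ℝ E) (1 / 4) (ProbabilityTheory.stdGaussian E) := by
  have h_trace : LinearMap.trace ℝ E
      (U.toContinuousLinearMap† * U.toContinuousLinearMap : E →L[ℝ] E) = finrank ℝ E := by
    rw [trace_adjoint_mul_self _ (stdOrthonormalBasis ℝ E)]
    simp
  have h_norm : ‖U.toContinuousLinearMap‖ * (1 / 4) ≤ 1 / 4 :=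
    mul_le_of_le_one_left (by norm_num) U.norm_toContinuousLinearMap_le
  simpa only [h_trace] using!
    hasSubexponentialMGF_inner_sub_trace U.toContinuousLinearMap (by norm_num) h_norm

end HansonWright

section Permutation

variable {ι : Type*} [Fintype ι]

lemma trace_piLpCongrLeft (σ : Equiv.Perm ι) :
    LinearMap.trace ℝ (EuclideanSpace ℝ ι)
      (LinearIsometryEquiv.piLpCongrLeft 2 ℝ ℝ σ).toLinearIsometry.toLinearMap
        = (Function.fixedPoints σ).ncard := by
  classical
  have h_ncard : (Function.fixedPoints σ).ncard = ∑ i, if i = σ i then 1 else 0 := by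
    rw [Set.ncard_eq_toFinset_card', ← Finset.card_filter]
    congr 1
    ext i
    simp [Function.IsFixedPt, eq_comm]
  rw [LinearMap.trace_eq_sum_inner _ (EuclideanSpace.basisFun ι ℝ), h_ncard]
  simp [EuclideanSpace.inner_single_left]

lemma hasSubexponentialMGF_sum_mul_perm (σ : Equiv.Perm ι) :
    HasSubexponentialMGF
      (fun x : ι → ℝ ↦ ∑ i, x i * x (σ i) - (Function.fixedPoints σ).ncard)
      (4 * Fintype.card ι) (1 / 4) (Measure.pi fun _ ↦ gaussianReal 0 1) := by
  have h := hasSubexponentialMGF_inner_linearIsometry_sub_trace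
    (LinearIsometryEquiv.piLpCongrLeft 2 ℝ ℝ σ).toLinearIsometry
  rw [← map_pi_eq_stdGaussian, finrank_euclideanSpace, trace_piLpCongrLeft,
    HasSubexponentialMGF.map_iff (by fun_prop) (by fun_prop)] at h
  convert h using 3 with x
  have h_inner : ⟪WithLp.toLp 2 x, LinearIsometryEquiv.piLpCongrLeft 2 ℝ ℝ σ (WithLp.toLp 2 x)⟫
      = ∑ i, x i * x (σ i) := by
    rw [← Equiv.sum_comp σ.symm]
    simp [PiLp.inner_apply]
  exact congrArg (· - _) h_inner.symm

lemma measure_abs_sum_mul_perm_ge_le (σ : Equiv.Perm ι) {κ : ℝ} (hκ : 0 ≤ κ) :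
    (Measure.pi fun _ ↦ gaussianReal 0 1).real {x : ι → ℝ | Fintype.card ι * κ
        ≤ |∑ i, x i * x (σ i) - (Function.fixedPoints σ).ncard|}
      ≤ 2 * Real.exp (-(1 / 16) * Fintype.card ι * min κ (κ ^ 2)) := by
  set n : ℝ := (Fintype.card ι : ℝ)
  have h_exponent : 1 / 16 * n * min κ (κ ^ 2)
      ≤ min ((n * κ) ^ 2 / (4 * (4 * n))) (1 / 4 * (n * κ) / 2) := by
    have hn0 : 0 ≤ n := by positivity
    refine le_min ?_ ?_
    · rcases eq_or_ne n 0 with h0 | h0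
      · simp [h0]
      calc 1 / 16 * n * min κ (κ ^ 2) ≤ 1 / 16 * n * κ ^ 2 := by gcongr; exact min_le_right _ _
        _ = (n * κ) ^ 2 / (4 * (4 * n)) := by field_simp; ring
    · calc 1 / 16 * n * min κ (κ ^ 2) ≤ 1 / 16 * n * κ := by gcongr; exact min_le_left _ _
        _ ≤ 1 / 4 * (n * κ) / 2 := by nlinarith [mul_nonneg hn0 hκ]
  refine ((hasSubexponentialMGF_sum_mul_perm σ).measure_abs_ge_le (by positivity) (by norm_num)
    (by positivity)).trans ?_
  gcongr
  linarith

end Permutation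

section Autocorrelation

variable {G : Type*} [AddGroup G] [DecidableEq G]

lemma ncard_fixedPoints_add_right (g : G) :
    (Function.fixedPoints (· + g)).ncard = if g = 0 then Nat.card G else 0 := by
  split_ifs with hg <;> simp [hg, Function.fixedPoints, Function.IsFixedPt]

lemma measure_iUnion_abs_autocorrelation_ge_le [Fintype G] {κ : ℝ} (hκ : 0 ≤ κ) :
    (Measure.pi fun _ ↦ gaussianReal 0 1).real (⋃ g, {x : G → ℝ | Fintype.card G * κ
        ≤ |∑ i, x i * x (i + g) - if g = 0 then (Fintype.card G : ℝ) else 0|})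
      ≤ 2 * Fintype.card G * Real.exp (-(1 / 16) * Fintype.card G * min κ (κ ^ 2)) := by
  have h_shift (g : G) := measure_abs_sum_mul_perm_ge_le (Equiv.addRight g) hκ
  simp only [Equiv.coe_addRight, ncard_fixedPoints_add_right, Nat.card_eq_fintype_card,
    Nat.cast_ite, Nat.cast_zero] at h_shift
  calc _ ≤ ∑ g, _ := measureReal_iUnion_fintype_le _
    _ ≤ ∑ _ : G, 2 * Real.exp (-(1 / 16) * Fintype.card G * min κ (κ ^ 2)) :=
      Finset.sum_le_sum fun g _ ↦ h_shift g
    _ = 2 * Fintype.card G * Real.exp (-(1 / 16) * Fintype.card G * min κ (κ ^ 2)) := by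
      rw [Finset.sum_const, Finset.card_univ, nsmul_eq_mul]
      ring

end Autocorrelation

lemma mul_le_abs_sub_of_le_abs_inv_mul_sub_one {n κ s : ℝ} (hn : 0 < n)
    (h : κ ≤ |n⁻¹ * s - 1|) : n * κ ≤ |s - n| := by
  calc n * κ ≤ n * |n⁻¹ * s - 1| := by gcongr
    _ = |s - n| := by
      rw [← abs_of_pos hn, ← abs_mul, abs_of_pos hn, mul_sub, mul_inv_cancel_left₀ hn.ne', mul_one]

/-- autocorrelation concentration for a Gaussian signal. There is a
universal constant `c > 0` such that for every `L ≥ 1`, `κ > 0` and `X ~ N(0, I_L)`,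
`Pr(|L⁻¹‖X‖² − 1| ≥ κ or max_{ℓ≠0} L⁻¹|⟨X, R_ℓ X⟩| > κ) ≤ 2L·e^{−cL·min(κ,κ²)}`,
where `⟨x, R_ℓ x⟩ = ∑_j x_j x_{j+ℓ}`. -/
theorem gaussian_autocorrelation_concentration :
    ∃ c : ℝ, 0 < c ∧ ∀ (L : ℕ), 1 ≤ L → ∀ κ : ℝ, 0 < κ →
      stdGaussian L
          {x | κ ≤ |(L : ℝ)⁻¹ * ∑ j, x j ^ 2 - 1| ∨
            ∃ ℓ : Fin L, ℓ.val ≠ 0 ∧ κ < (L : ℝ)⁻¹ * |∑ j, x j * x (j + ℓ)|} ≤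
        ENNReal.ofReal (2 * L * Real.exp (-c * L * min κ (κ ^ 2))) := by
  refine ⟨1 / 16, by norm_num, fun L hL κ hκ ↦ ?_⟩
  have : NeZero L := ⟨by lia⟩
  have hL0 : (0 : ℝ) < L := by exact_mod_cast hL
  have h_union := measure_iUnion_abs_autocorrelation_ge_le (G := Fin L) hκ.le
  rw [Fintype.card_fin] at h_union
  rw [stdGaussian, ENNReal.le_ofReal_iff_toReal_le (measure_ne_top _ _) (by positivity)]
  refine (measureReal_mono ?_).trans h_union
  rintro x (h_norm | ⟨ℓ, hℓ, h_corr⟩) <;> rw [Set.mem_iUnion]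
  · refine ⟨0, ?_⟩
    simpa [sq] using mul_le_abs_sub_of_le_abs_inv_mul_sub_one hL0 h_norm
  · refine ⟨ℓ, ?_⟩
    have hℓ0 : ℓ ≠ 0 := fun h ↦ hℓ (by simp [h])
    simpa [hℓ0] using ((lt_inv_mul_iff₀ hL0).1 h_corr).le

end MRAformal
end
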